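/- arXiv:1611.05070 — 3 statements merged into one kernel-verified Lean document; each statement's English description precedes it below -/
import Mathlib

section
/- Convergence of the expected coloring ratio for the binomial model: for every dimension d ≥ 1, every k ≥ 1, and every ν > 0, one has lim_{n→∞} E[H_{k,(ν/n)^{1/d}}(n)]/n = a_{k,ν}. -/
open MeasureTheory ProbabilityTheory Filter

noncomputable instance instDecEqEuclidean (d : ℕ) :
    DecidableEq (EuclideanSpace ℝ (Fin d)) := Classical.decEq _

/-- `maxColorable d k r V` is the maximum number of vertices of the geometric
graph `G_r(V)` (edges between distinct points of `V` at Euclidean distance at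
most `r`) that can be properly colored with `k` colors, i.e. the maximum
cardinality of a subset `S ⊆ V` admitting a proper `k`-coloring. -/
noncomputable def maxColorable (d k : ℕ) (r : ℝ)
    (V : Finset (EuclideanSpace ℝ (Fin d))) : ℕ :=
  sSup {m : ℕ | ∃ S : Finset (EuclideanSpace ℝ (Fin d)), S ⊆ V ∧ S.card = m ∧
    ∃ c : EuclideanSpace ℝ (Fin d) → Fin k,
      ∀ u ∈ S, ∀ v ∈ S, u ≠ v → dist u v ≤ r → c u ≠ c v}

/-- The unit cube `[0,1]^d`. -/
def unitCube (d : ℕ) : Set (EuclideanSpace ℝ (Fin d)) :=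
  {x | ∀ i, x i ∈ Set.Icc (0 : ℝ) 1}

/-- The uniform distribution on the unit cube `[0,1]^d` (Lebesgue measure
restricted to the cube, which has total mass one). -/
noncomputable def uniformCube (d : ℕ) : Measure (EuclideanSpace ℝ (Fin d)) :=
  volume.restrict (unitCube d)

/-- `EH d k r n = E[H_{k,r}(n)] = E[N_{k,r}({X_1,…,X_n})]` for `X_1,…,X_n`
i.i.d. uniform on the unit cube `[0,1]^d`. -/
noncomputable def EH (d k : ℕ) (r : ℝ) (n : ℕ) : ℝ :=
  ∫ x : Fin n → EuclideanSpace ℝ (Fin d),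
    (maxColorable d k r (Finset.image x Finset.univ) : ℝ)
    ∂(Measure.pi fun _ => uniformCube d)

/-- `EF d k lam t = E[F_{k,lam}(t)] = ∑_n P(Po(lam t^d) = n) E[H_{k,1/t}(n)]`,
the expected maximum number of `k`-colorable vertices of the unit-distance
geometric graph on a Poisson process of intensity `lam` in `[0,t]^d`. -/
noncomputable def EF (d k : ℕ) (lam t : ℝ) : ℝ :=
  ∑' n : ℕ, poissonPMFReal (Real.toNNReal (lam * t ^ d)) n * EH d k (1 / t) n

/-- The normalized expectation `\bar F_{k,lam}(t) = E[F_{k,lam}(t)]/(lam t^d)`. -/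
noncomputable def Fbar (d k : ℕ) (lam t : ℝ) : ℝ :=
  EF d k lam t / (lam * t ^ d)

/-- The constant `a_{k,lam} = inf_{t>0} \bar F_{k,lam}(t)`. -/
noncomputable def aConst (d k : ℕ) (lam : ℝ) : ℝ :=
  sInf {x : ℝ | ∃ t : ℝ, 0 < t ∧ x = Fbar d k lam t}

/-- The volume `V_d(r) = π^{d/2} r^d / Γ(d/2 + 1)` of the `d`-dimensional
Euclidean ball of radius `r`. -/
noncomputable def ballVol (d : ℕ) (r : ℝ) : ℝ :=
  Real.pi ^ ((d : ℝ) / 2) * r ^ d / Real.Gamma ((d : ℝ) / 2 + 1)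


namespace ColorAux

abbrev E (d : ℕ) := EuclideanSpace ℝ (Fin d)

/-- proper coloring of a finite set of points -/
def Proper (d k : ℕ) (r : ℝ) (S : Finset (E d)) : Prop :=
  ∃ c : E d → Fin k, ∀ u ∈ S, ∀ v ∈ S, u ≠ v → dist u v ≤ r → c u ≠ c v

lemma Proper.mono {d k : ℕ} {r : ℝ} {S T : Finset (E d)} (h : Proper d k r T) (hST : S ⊆ T) :
    Proper d k r S := by
  obtain ⟨c, hc⟩ := h
  exact ⟨c, fun u hu v hv => hc u (hST hu) v (hST hv)⟩

lemma bdd (d k : ℕ) (r : ℝ) (V : Finset (E d)) :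
    BddAbove {m : ℕ | ∃ S : Finset (EuclideanSpace ℝ (Fin d)), S ⊆ V ∧ S.card = m ∧
    ∃ c : EuclideanSpace ℝ (Fin d) → Fin k,
      ∀ u ∈ S, ∀ v ∈ S, u ≠ v → dist u v ≤ r → c u ≠ c v} := by
  refine ⟨V.card, ?_⟩
  rintro m ⟨S, hS, rfl, -⟩
  exact Finset.card_le_card hS

lemma le_maxColorable {d k : ℕ} {r : ℝ} {V S : Finset (E d)} (hS : S ⊆ V) (h : Proper d k r S) :
    S.card ≤ maxColorable d k r V :=
  le_csSup (bdd d k r V) ⟨S, hS, rfl, h⟩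

lemma exists_maxColorable {d k : ℕ} (hk : 1 ≤ k) (r : ℝ) (V : Finset (E d)) :
    ∃ S ⊆ V, S.card = maxColorable d k r V ∧ Proper d k r S := by
  have := Nat.sSup_mem (s := {m : ℕ | ∃ S : Finset (EuclideanSpace ℝ (Fin d)), S ⊆ V ∧ S.card = m ∧
    ∃ c : EuclideanSpace ℝ (Fin d) → Fin k,
      ∀ u ∈ S, ∀ v ∈ S, u ≠ v → dist u v ≤ r → c u ≠ c v})
    ⟨0, ∅, by simp, by simp, fun _ => ⟨0, hk⟩, by simp⟩ (bdd d k r V)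
  obtain ⟨S, h1, h2, h3⟩ := this
  exact ⟨S, h1, h2, h3⟩

lemma maxColorable_mono {d k : ℕ} (hk : 1 ≤ k) (r : ℝ) {V W : Finset (E d)} (h : V ⊆ W) :
    maxColorable d k r V ≤ maxColorable d k r W := by
  obtain ⟨S, h1, h2, h3⟩ := exists_maxColorable hk r V
  rw [← h2]
  exact le_maxColorable (h1.trans h) h3

lemma maxColorable_le_card {d k : ℕ} (hk : 1 ≤ k) (r : ℝ) (V : Finset (E d)) :
    maxColorable d k r V ≤ V.card := by
  obtain ⟨S, h1, h2, h3⟩ := exists_maxColorable hk r V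
  rw [← h2]
  exact Finset.card_le_card h1

lemma maxColorable_insert {d k : ℕ} (hk : 1 ≤ k) (r : ℝ) (x : E d) (V : Finset (E d)) :
    maxColorable d k r (insert x V) ≤ maxColorable d k r V + 1 := by
  obtain ⟨S, h1, h2, h3⟩ := exists_maxColorable hk r (insert x V)
  rw [← h2]
  have h4 : S.erase x ⊆ V := by
    intro y hy
    rw [Finset.mem_erase] at hy
    exact (Finset.mem_insert.1 (h1 hy.2)).resolve_left hy.1
  have h5 := le_maxColorable h4 (h3.mono (Finset.erase_subset x S))
  have h6 := Finset.pred_card_le_card_erase (s := S) (a := x)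
  omega

open Classical in
lemma maxColorable_le_sum {d k : ℕ} (hk : 1 ≤ k) (r : ℝ) (V : Finset (E d))
    {ι : Type*} [Fintype ι] (Q : ι → Set (E d)) (hQ : ∀ x ∈ V, ∃ j, x ∈ Q j) :
    maxColorable d k r V ≤ ∑ j, maxColorable d k r (V.filter (· ∈ Q j)) := by
  obtain ⟨S, h1, h2, h3⟩ := exists_maxColorable hk r V
  rw [← h2]
  calc S.card ≤ (Finset.univ.biUnion fun j => S.filter (· ∈ Q j)).card := by
        apply Finset.card_le_card
        intro x hx
        obtain ⟨j, hj⟩ := hQ x (h1 hx)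
        simp only [Finset.mem_biUnion, Finset.mem_univ, true_and, Finset.mem_filter]
        exact ⟨j, hx, hj⟩
    _ ≤ ∑ j, (S.filter (· ∈ Q j)).card := Finset.card_biUnion_le
    _ ≤ _ := Finset.sum_le_sum fun j _ =>
        le_maxColorable (Finset.filter_subset_filter _ h1) (h3.mono (Finset.filter_subset _ _))

lemma maxColorable_image {d k : ℕ} (hk : 1 ≤ k) (r s : ℝ) (hs : 0 < s) (f : E d → E d)
    (hf : ∀ x y, dist (f x) (f y) = s * dist x y) (V : Finset (E d)) :
    maxColorable d k r (V.image f) = maxColorable d k (r / s) V := by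
  have hinj : Function.Injective f := by
    intro x y h
    have := hf x y
    rw [h, dist_self] at this
    have := (mul_eq_zero.1 this.symm).resolve_left hs.ne'
    exact dist_eq_zero.1 this
  apply le_antisymm
  · obtain ⟨S, h1, h2, c, hc⟩ := exists_maxColorable hk r (V.image f)
    rw [← h2]
    obtain ⟨T, hT, rfl⟩ := Finset.subset_image_iff.1 h1
    rw [Finset.card_image_of_injective _ hinj]
    refine le_maxColorable hT ⟨c ∘ f, fun u hu v hv huv hd => ?_⟩
    refine hc _ (Finset.mem_image_of_mem _ hu) _ (Finset.mem_image_of_mem _ hv) (hinj.ne huv) ?_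
    rw [hf]
    rw [le_div_iff₀ hs] at hd
    linarith
  · obtain ⟨S, h1, h2, c, hc⟩ := exists_maxColorable hk (r / s) V
    rw [← h2, ← Finset.card_image_of_injective _ hinj]
    refine le_maxColorable (Finset.image_subset_image h1) ⟨c ∘ Function.invFun f, ?_⟩
    intro u hu v hv huv hd
    obtain ⟨u, hu', rfl⟩ := Finset.mem_image.1 hu
    obtain ⟨v, hv', rfl⟩ := Finset.mem_image.1 hv
    simp only [Function.comp, Function.leftInverse_invFun hinj _]
    rw [hf] at hd
    refine hc u hu' v hv' (fun h => huv (by rw [h])) ?_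
    rw [le_div_iff₀ hs]
    linarith

open Classical in
lemma le_maxColorable_iff {d k : ℕ} (hk : 1 ≤ k) (r : ℝ) {ι : Type*} [Fintype ι]
    (Q : Set (E d)) (x : ι → E d) (m : ℕ) :
    m ≤ maxColorable d k r ((Finset.image x Finset.univ).filter (· ∈ Q)) ↔
      ∃ (A : Finset ι) (c : ι → Fin k), m ≤ A.card ∧ (∀ i ∈ A, x i ∈ Q) ∧
        ∀ i ∈ A, ∀ j ∈ A, i ≠ j → ¬ (dist (x i) (x j) ≤ 0) ∧ (dist (x i) (x j) ≤ r → c i ≠ c j) := by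
  constructor
  · intro h
    obtain ⟨S, h1, h2, c, hc⟩ := exists_maxColorable hk r
      ((Finset.image x Finset.univ).filter (· ∈ Q))
    have hsurj : Set.SurjOn x (Finset.univ : Finset ι) (S : Set (E d)) := by
      intro u hu
      obtain ⟨i, -, hi⟩ := Finset.mem_image.1 (Finset.mem_filter.1 (h1 hu)).1
      exact ⟨i, by simp, hi⟩
    obtain ⟨A, -, hA, hAS⟩ := Finset.exists_subset_injOn_image_eq_of_surjOn _ _ hsurj
    subst hAS
    refine ⟨A, c ∘ x, ?_, ?_, ?_⟩
    · rw [Finset.card_image_of_injOn hA] at h2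
      exact h.trans h2.ge
    · intro i hi
      exact (Finset.mem_filter.1 (h1 (Finset.mem_image_of_mem _ hi))).2
    · intro i hi j hj hij
      have hne : x i ≠ x j := fun h => hij (hA hi hj h)
      refine ⟨by simpa using hne, fun hd => ?_⟩
      exact hc _ (Finset.mem_image_of_mem _ hi) _ (Finset.mem_image_of_mem _ hj) hne hd
  · rintro ⟨A, c, hm, hQ, h⟩
    have hA : Set.InjOn x A := by
      intro i hi j hj hij
      by_contra hne
      exact (h i hi j hj hne).1 (by simp [hij])
    rw [← Finset.card_image_of_injOn hA] at hm
    refine hm.trans (le_maxColorable (fun u hu => ?_) ?_)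
    · obtain ⟨i, hi, rfl⟩ := Finset.mem_image.1 hu
      exact Finset.mem_filter.2 ⟨Finset.mem_image_of_mem _ (Finset.mem_univ _), hQ i hi⟩
    rcases A.eq_empty_or_nonempty with rfl | hne
    · exact ⟨fun _ => ⟨0, hk⟩, by simp⟩
    have : Nonempty ι := ⟨hne.choose⟩
    refine ⟨fun u => c (Function.invFunOn x A u), fun u hu v hv huv hd => ?_⟩
    obtain ⟨i, hi, rfl⟩ := Finset.mem_image.1 hu
    obtain ⟨j, hj, rfl⟩ := Finset.mem_image.1 hv
    beta_reduce
    rw [hA.leftInvOn_invFunOn hi, hA.leftInvOn_invFunOn hj]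
    exact (h i hi j hj (fun h => huv (by rw [h]))).2 hd

open Classical in
lemma measurable_maxColorable_filter {d k : ℕ} (hk : 1 ≤ k) (r : ℝ) {ι : Type*} [Fintype ι]
    {Q : Set (E d)} (hQ : MeasurableSet Q) :
    Measurable fun x : ι → E d =>
      maxColorable d k r ((Finset.image x Finset.univ).filter (· ∈ Q)) := by
  apply measurable_of_Ici
  intro m
  have : (fun x : ι → E d =>
        maxColorable d k r ((Finset.image x Finset.univ).filter (· ∈ Q))) ⁻¹' Set.Ici m =
      ⋃ (A : Finset ι) (c : ι → Fin k), {x | m ≤ A.card ∧ (∀ i ∈ A, x i ∈ Q) ∧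
        ∀ i ∈ A, ∀ j ∈ A, i ≠ j →
          ¬ (dist (x i) (x j) ≤ 0) ∧ (dist (x i) (x j) ≤ r → c i ≠ c j)} := by
    ext x
    simp only [Set.mem_preimage, Set.mem_Ici, le_maxColorable_iff hk, Set.mem_iUnion,
      Set.mem_ofPred_eq]
  rw [this]
  refine MeasurableSet.iUnion fun A => MeasurableSet.iUnion fun c => ?_
  have h : ∀ i j (a : ℝ), MeasurableSet {x : ι → E d | dist (x i) (x j) ≤ a} := fun i j a =>
    measurableSet_le (by fun_prop) measurable_const
  have h' : ∀ i, MeasurableSet {x : ι → E d | x i ∈ Q} := fun i =>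
    (measurable_pi_apply i) hQ
  measurability

lemma measurable_maxColorable {d k : ℕ} (hk : 1 ≤ k) (r : ℝ) {ι : Type*} [Fintype ι] :
    Measurable fun x : ι → E d => maxColorable d k r (Finset.image x Finset.univ) := by
  have := measurable_maxColorable_filter (ι := ι) (d := d) hk r MeasurableSet.univ
  simpa using this

end ColorAux

namespace ColorAux
open scoped ENNReal

/-- expected value of the colorable number, as a lower integral over a power of `μ` -/
noncomputable def L (d k : ℕ) (r : ℝ) (μ : Measure (E d)) (ι : Type*) [Fintype ι] : ℝ≥0∞ :=
  ∫⁻ x : ι → E d, (maxColorable d k r (Finset.image x Finset.univ) : ℝ≥0∞)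
    ∂(Measure.pi fun _ => μ)

lemma measurable_N {d k : ℕ} (hk : 1 ≤ k) (r : ℝ) {ι : Type*} [Fintype ι] :
    Measurable fun x : ι → E d => (maxColorable d k r (Finset.image x Finset.univ) : ℝ≥0∞) :=
  (measurable_of_countable (fun n : ℕ => (n : ℝ≥0∞))).comp (measurable_maxColorable hk r)

lemma L_congr {d k : ℕ} (r : ℝ) (μ : Measure (E d)) [IsFiniteMeasure μ]
    {ι ι' : Type*} [Fintype ι] [Fintype ι'] (e : ι ≃ ι') : L d k r μ ι = L d k r μ ι' := by
  unfold L
  have h := measurePreserving_piCongrLeft (α := fun _ : ι' => E d) (fun _ => μ) e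
  rw [← h.lintegral_comp_emb (MeasurableEquiv.measurableEmbedding _)]
  refine lintegral_congr fun x => ?_
  congr 3
  ext u
  simp only [Finset.mem_image, Finset.mem_univ, true_and]
  constructor
  · rintro ⟨i, rfl⟩
    exact ⟨e i, by simp [MeasurableEquiv.coe_piCongrLeft, Equiv.piCongrLeft_apply_apply]⟩
  · rintro ⟨i, rfl⟩
    refine ⟨e.symm i, ?_⟩
    obtain ⟨j, rfl⟩ := e.surjective i
    simp [MeasurableEquiv.coe_piCongrLeft, Equiv.piCongrLeft_apply_apply]

open Classical in
lemma thin_piece {d k : ℕ} (hk : 1 ≤ k) (r : ℝ) (μ : Measure (E d)) [IsFiniteMeasure μ]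
    (Q : Set (E d)) (hQ : MeasurableSet Q) {ι : Type*} [Fintype ι] [DecidableEq ι] (A : Finset ι) :
    ∫⁻ x in Set.pi Set.univ (fun i : ι => if i ∈ A then Q else Qᶜ),
      (maxColorable d k r ((Finset.image x Finset.univ).filter (· ∈ Q)) : ℝ≥0∞)
      ∂(Measure.pi fun _ => μ) =
    μ Qᶜ ^ (Fintype.card ι - A.card) * L d k r (μ.restrict Q) (Fin A.card) := by
  have hmeas : MeasurableSet (Set.pi Set.univ (fun i : ι => if i ∈ A then Q else Qᶜ)) := by
    refine MeasurableSet.univ_pi fun i => ?_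
    split_ifs
    exacts [hQ, hQ.compl]
  have h1 : ∀ x ∈ Set.pi Set.univ (fun i : ι => if i ∈ A then Q else Qᶜ),
      (maxColorable d k r ((Finset.image x Finset.univ).filter (· ∈ Q)) : ℝ≥0∞) =
      (fun y : ({i // i ∈ A} → E d) × ({i // ¬ i ∈ A} → E d) =>
        (maxColorable d k r (Finset.image y.1 Finset.univ) : ℝ≥0∞))
        (MeasurableEquiv.piEquivPiSubtypeProd (fun _ => E d) (· ∈ A) x) := by
    intro x hx
    congr 2
    ext u
    simp only [Finset.mem_filter, Finset.mem_image, Finset.mem_univ, true_and, Subtype.exists]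
    constructor
    · rintro ⟨⟨i, rfl⟩, hu⟩
      refine ⟨i, ?_, rfl⟩
      by_contra hi
      have := hx i (Set.mem_univ _)
      simp only [hi, if_false] at this
      exact this hu
    · rintro ⟨i, hi, rfl⟩
      refine ⟨⟨i, rfl⟩, ?_⟩
      have := hx i (Set.mem_univ _)
      simp only [hi, if_true] at this
      exact this
  rw [setLIntegral_congr_fun hmeas h1, Measure.restrict_pi_pi]
  have h2 := measurePreserving_piEquivPiSubtypeProd (α := fun _ : ι => E d)
    (fun i => μ.restrict (if i ∈ A then Q else Qᶜ)) (· ∈ A)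
  rw [h2.lintegral_comp_emb (MeasurableEquiv.measurableEmbedding _)
    (fun y : ({i // i ∈ A} → E d) × ({i // ¬ i ∈ A} → E d) =>
        (maxColorable d k r (Finset.image y.1 Finset.univ) : ℝ≥0∞))]
  rw [← lintegral_map (f := fun y : ({i // i ∈ A} → E d) =>
    (maxColorable d k r (Finset.image y Finset.univ) : ℝ≥0∞)) (measurable_N hk r) measurable_fst,
    Measure.map_fst_prod, lintegral_smul_measure]
  have h3 : (fun i : {i // i ∈ A} => μ.restrict (if (i : ι) ∈ A then Q else Qᶜ)) =
      fun _ => μ.restrict Q := by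
    ext1 i; simp [i.2]
  have h4 : (Measure.pi fun i : {i // ¬ i ∈ A} => μ.restrict (if (i : ι) ∈ A then Q else Qᶜ))
      Set.univ = μ Qᶜ ^ (Fintype.card ι - A.card) := by
    rw [Measure.pi_univ, Finset.prod_congr rfl (g := fun _ => μ Qᶜ)]
    · simp [Fintype.card_subtype_compl]
    · intro i _
      simp [i.2]
  rw [h4, smul_eq_mul, ← L_congr r (μ.restrict Q) A.equivFin]
  unfold L
  congr 2
  · rw [h3]
    congr!

open Classical in
lemma thin {d k : ℕ} (hk : 1 ≤ k) (r : ℝ) (μ : Measure (E d)) [IsFiniteMeasure μ]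
    (Q : Set (E d)) (hQ : MeasurableSet Q) (n : ℕ) :
    ∫⁻ x : Fin n → E d,
      (maxColorable d k r ((Finset.image x Finset.univ).filter (· ∈ Q)) : ℝ≥0∞)
      ∂(Measure.pi fun _ => μ) =
    ∑ j ∈ Finset.range (n + 1), (n.choose j : ℝ≥0∞) *
      (μ Qᶜ ^ (n - j) * L d k r (μ.restrict Q) (Fin j)) := by
  have hmeas : ∀ A : Finset (Fin n),
      MeasurableSet (Set.pi Set.univ (fun i : Fin n => if i ∈ A then Q else Qᶜ)) := by
    intro A
    refine MeasurableSet.univ_pi fun i => ?_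
    split_ifs
    exacts [hQ, hQ.compl]
  have hU : (⋃ A : Finset (Fin n),
      (Set.pi Set.univ (fun i : Fin n => if i ∈ A then Q else Qᶜ))) = Set.univ := by
    ext x
    simp only [Set.mem_iUnion, Set.mem_univ, iff_true]
    refine ⟨Finset.univ.filter (fun i => x i ∈ Q), fun i _ => ?_⟩
    by_cases h : x i ∈ Q <;> simp [h]
  have hdisj : Pairwise (Function.onFun Disjoint (fun A : Finset (Fin n) =>
      (Set.pi Set.univ (fun i : Fin n => if i ∈ A then Q else Qᶜ)))) := by
    intro A B hAB
    rw [Function.onFun, Set.disjoint_left]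
    intro x hA hB
    apply hAB
    ext i
    have h1 := hA i (Set.mem_univ _)
    have h2 := hB i (Set.mem_univ _)
    by_cases ha : i ∈ A <;> by_cases hb : i ∈ B <;> simp_all
  rw [← setLIntegral_univ, ← hU, lintegral_iUnion hmeas hdisj, tsum_fintype]
  simp_rw [thin_piece hk r μ Q hQ]
  rw [← Finset.powerset_univ, Finset.sum_powerset_apply_card
    (fun j => μ Qᶜ ^ (Fintype.card (Fin n) - j) * L d k r (μ.restrict Q) (Fin j))]
  simp

end ColorAux

namespace ColorAux
open scoped ENNReal

/-- axis-parallel box with lower corner `a` and side `s` -/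
def Box {d : ℕ} (a : E d) (s : ℝ) : Set (E d) := {x : E d | ∀ i, x i ∈ Set.Icc (a i) (a i + s)}

lemma measurableSet_box {d : ℕ} (a : E d) (s : ℝ) :
    MeasurableSet (Box a s) := by
  have : Box a s =
      ⋂ i, (fun x : E d => x i) ⁻¹' Set.Icc (a i) (a i + s) := by
    ext x; simp [Box]
  rw [this]
  refine MeasurableSet.iInter fun i => ?_
  exact (by fun_prop : Measurable fun x : E d => x i) measurableSet_Icc

lemma unitCube_eq_box (d : ℕ) :
    unitCube d = Box (0 : E d) 1 := by
  simp [unitCube, Box]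

lemma measurableSet_unitCube (d : ℕ) : MeasurableSet (unitCube d) := by
  rw [unitCube_eq_box]; exact measurableSet_box _ _

lemma volume_unitCube (d : ℕ) : volume (unitCube d) = 1 := by
  have h := (EuclideanSpace.volume_preserving_symm_measurableEquiv_toLp (Fin d))
  have h2 : unitCube d = (MeasurableEquiv.toLp 2 (Fin d → ℝ)).symm ⁻¹'
      (Set.pi Set.univ fun _ => Set.Icc (0 : ℝ) 1) := by
    ext x
    simp [unitCube, Pi.le_def, forall_and]
  rw [h2, h.measure_preimage_equiv, volume_pi_pi]
  simp

instance (d : ℕ) : IsProbabilityMeasure (uniformCube d) :=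
  ⟨by simp [uniformCube, volume_unitCube]⟩

lemma restrict_box {d : ℕ} (a : E d) (s : ℝ) (hs : 0 < s) :
    volume.restrict (Box a s) =
      ENNReal.ofReal (s ^ d) • (uniformCube d).map (fun y => a + s • y) := by
  have hm : Measurable (fun y : E d => a + s • y) := by fun_prop
  have h1 : (volume : Measure (E d)).map (fun y => a + s • y) =
      ENNReal.ofReal ((s ^ d)⁻¹) • volume := by
    have h := Measure.map_addHaar_smul (volume : Measure (E d)) hs.ne'
    have : (fun y : E d => a + s • y) = (fun y => a + y) ∘ (fun y => s • y) := rfl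
    rw [this, ← Measure.map_map (by fun_prop) (by fun_prop), h, Measure.map_smul,
      map_add_left_eq_self]
    simp [abs_of_pos hs]
  have h2 : (fun y : E d => a + s • y) ⁻¹' (Box a s) =
      unitCube d := by
    ext y
    simp only [unitCube, Box, Set.mem_preimage, Set.mem_ofPred_eq, Set.mem_Icc, PiLp.add_apply,
      PiLp.smul_apply, smul_eq_mul]
    refine forall_congr' fun i => ?_
    constructor
    · rintro ⟨h1, h2⟩
      exact ⟨by by_contra h; nlinarith, by by_contra h; nlinarith⟩
    · rintro ⟨h1, h2⟩
      exact ⟨by nlinarith, by nlinarith⟩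
  rw [uniformCube, ← h2, ← Measure.restrict_map hm (measurableSet_box a s), h1,
    Measure.restrict_smul, smul_smul, ← ENNReal.ofReal_mul (by positivity),
    mul_inv_cancel₀ (by positivity)]
  simp

lemma pi_smul' {X : Type*} [MeasurableSpace X] (μ : Measure X) [IsFiniteMeasure μ] (c : ℝ≥0∞)
    (hc : c ≠ ∞) (n : ℕ) :
    Measure.pi (fun _ : Fin n => c • μ) = c ^ n • Measure.pi (fun _ : Fin n => μ) := by
  have : IsFiniteMeasure (c • μ) := ⟨by
    simpa using ENNReal.mul_lt_top hc.lt_top (measure_lt_top μ _)⟩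
  refine Measure.pi_eq fun s hs => ?_
  simp [Measure.pi_pi, Finset.prod_mul_distrib]

lemma L_box {d k : ℕ} (hk : 1 ≤ k) (r : ℝ) (a : E d) (s : ℝ) (hs : 0 < s) (j : ℕ) :
    L d k r (volume.restrict (Box a s)) (Fin j) =
      ENNReal.ofReal (s ^ d) ^ j * L d k (r / s) (uniformCube d) (Fin j) := by
  have hm : Measurable (fun y : E d => a + s • y) := by fun_prop
  have : IsProbabilityMeasure ((uniformCube d).map (fun y => a + s • y)) :=
    Measure.isProbabilityMeasure_map hm.aemeasurable
  unfold L
  rw [restrict_box a s hs, pi_smul' _ _ ENNReal.ofReal_ne_top, lintegral_smul_measure, smul_eq_mul]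
  congr 1
  rw [← Measure.pi_map_pi (fun _ => hm.aemeasurable), lintegral_map (measurable_N hk r)
    (by fun_prop)]
  refine lintegral_congr fun x => ?_
  have := maxColorable_image hk r s hs (fun y => a + s • y) (fun x y => by
    simp [dist_smul₀, abs_of_pos hs]) (Finset.image x Finset.univ)
  rw [← this, Finset.image_image]
  rfl

/-- Poisson weights in `ℝ≥0∞` -/
noncomputable def P (l : ℝ) (n : ℕ) : ℝ≥0∞ := ENNReal.ofReal (Real.exp (-l) * l ^ n / n.factorial)

lemma tsum_P {l : ℝ} (hl : 0 ≤ l) : ∑' n, P l n = 1 := by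
  have h : HasSum (fun n : ℕ => Real.exp (-l) * l ^ n / n.factorial) 1 :=
    hasSum_one_poissonMeasure ⟨l, hl⟩
  unfold P
  rw [← ENNReal.ofReal_tsum_of_nonneg (fun n => by positivity) h.summable]
  rw [h.tsum_eq]; simp

lemma P_mul {l q : ℝ} (hl : 0 ≤ l) (hq : 0 ≤ q) (hq1 : q ≤ 1) (i j : ℕ) :
    P l (i + j) * (((i + j).choose j : ℝ≥0∞) *
      (ENNReal.ofReal (1 - q) ^ i * ENNReal.ofReal q ^ j)) = P (l * (1 - q)) i * P (l * q) j := by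
  have h1 : 0 ≤ 1 - q := by linarith
  unfold P
  rw [← ENNReal.ofReal_natCast, ← ENNReal.ofReal_pow hq, ← ENNReal.ofReal_pow h1,
    ← ENNReal.ofReal_mul (by positivity), ← ENNReal.ofReal_mul (by positivity),
    ← ENNReal.ofReal_mul (by positivity), ← ENNReal.ofReal_mul (by positivity)]
  congr 1
  have h2 : Real.exp (-l) = Real.exp (-(l * (1 - q))) * Real.exp (-(l * q)) := by
    rw [← Real.exp_add]; congr 1; ring
  have h3 : ((i + j).choose j : ℝ) = (i + j).factorial / (i.factorial * j.factorial) := by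
    rw [add_comm i j, Nat.cast_add_choose, mul_comm (i.factorial : ℝ)]
  rw [h2, h3, mul_pow, mul_pow, pow_add]
  field_simp

lemma poisson_thin {l q : ℝ} (hl : 0 ≤ l) (hq : 0 ≤ q) (hq1 : q ≤ 1) (g : ℕ → ℝ≥0∞) :
    ∑' n, P l n * ∑ j ∈ Finset.range (n + 1), (n.choose j : ℝ≥0∞) *
      (ENNReal.ofReal (1 - q) ^ (n - j) * (ENNReal.ofReal q ^ j * g j)) =
    ∑' j, P (l * q) j * g j := by
  have h1 : ∀ n, P l n * ∑ j ∈ Finset.range (n + 1), (n.choose j : ℝ≥0∞) *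
      (ENNReal.ofReal (1 - q) ^ (n - j) * (ENNReal.ofReal q ^ j * g j)) =
      ∑ p ∈ Finset.HasAntidiagonal.antidiagonal n, P (l * (1 - q)) p.1 * P (l * q) p.2 * g p.2 := by
    intro n
    rw [← Finset.Nat.sum_antidiagonal_swap, Finset.Nat.sum_antidiagonal_eq_sum_range_succ_mk,
      Finset.mul_sum]
    refine Finset.sum_congr rfl fun j hj => ?_
    have hj' : j ≤ n := by simpa [Nat.lt_succ_iff] using hj
    simp only [Prod.swap]
    rw [← P_mul hl hq hq1, Nat.sub_add_cancel hj']
    ring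
  simp_rw [h1]
  calc ∑' n, ∑ p ∈ Finset.HasAntidiagonal.antidiagonal n, P (l * (1 - q)) p.1 * P (l * q) p.2 * g p.2
      = ∑' p : ℕ × ℕ, P (l * (1 - q)) p.1 * P (l * q) p.2 * g p.2 := by
        rw [← Finset.HasAntidiagonal.sigmaAntidiagonalEquivProd.tsum_eq, ENNReal.tsum_sigma']
        refine tsum_congr fun n => ?_
        rw [← Finset.tsum_subtype]
        rfl
    _ = ∑' j, ∑' i, P (l * (1 - q)) i * (P (l * q) j * g j) := by
        rw [ENNReal.tsum_prod', ENNReal.tsum_comm]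
        simp_rw [mul_assoc]
    _ = _ := by
        simp_rw [ENNReal.tsum_mul_right]
        rw [tsum_P (mul_nonneg hl (by linarith))]
        simp

/-- `EF` as an extended nonnegative real -/
noncomputable def EFe (d k : ℕ) (lam t : ℝ) : ℝ≥0∞ :=
  ∑' n, P (lam * t ^ d) n * L d k (1 / t) (uniformCube d) (Fin n)

open Classical in
lemma EFe_box {d k : ℕ} (hk : 1 ≤ k) (lam T : ℝ) (hlam : 0 ≤ lam) (hT : 0 < T) (a : E d) (s : ℝ)
    (hs : 0 < s) (hs1 : s ≤ 1)
    (hsub : Box a s ⊆ unitCube d) :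
    ∑' n, P (lam * T ^ d) n * ∫⁻ x : Fin n → E d, (maxColorable d k (1 / T)
      ((Finset.image x Finset.univ).filter
        (· ∈ Box a s)) : ℝ≥0∞)
      ∂(Measure.pi fun _ => uniformCube d) = EFe d k lam (T * s) := by
  set Q : Set (E d) := Box a s with hQdef
  have hQ : MeasurableSet Q := measurableSet_box a s
  have h1 : (uniformCube d).restrict Q = volume.restrict Q := by
    rw [uniformCube, Measure.restrict_restrict hQ, Set.inter_eq_left.2 hsub]
  have h2 : uniformCube d Q = ENNReal.ofReal (s ^ d) := by
    have : uniformCube d Q = (uniformCube d).restrict Q Set.univ := by simp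
    rw [this, h1, hQdef, restrict_box a s hs, Measure.smul_apply,
      Measure.map_apply (by fun_prop) MeasurableSet.univ]
    simp
  have h3 : uniformCube d Qᶜ = ENNReal.ofReal (1 - s ^ d) := by
    rw [prob_compl_eq_one_sub hQ, h2, ENNReal.ofReal_sub _ (by positivity)]
    simp
  simp_rw [thin hk (1 / T) (uniformCube d) Q hQ, h1, h3, hQdef, L_box hk (1 / T) a s hs]
  rw [poisson_thin (by positivity) (by positivity) (pow_le_one₀ hs.le hs1), EFe]
  rw [mul_pow, mul_assoc, div_div]

end ColorAux

namespace ColorAux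
open scoped ENNReal

lemma L_le {d k : ℕ} (hk : 1 ≤ k) (r : ℝ) (n : ℕ) : L d k r (uniformCube d) (Fin n) ≤ n := by
  unfold L
  calc _ ≤ ∫⁻ x : Fin n → E d, (n : ℝ≥0∞) ∂(Measure.pi fun _ => uniformCube d) := by
        refine lintegral_mono fun x => ?_
        have h : maxColorable d k r (Finset.image x Finset.univ) ≤ n :=
          (maxColorable_le_card hk r _).trans (by simpa using Finset.card_image_le (s := Finset.univ) (f := x))
        exact Nat.cast_le.2 h
    _ = n := by simp

lemma L_ne_top {d k : ℕ} (hk : 1 ≤ k) (r : ℝ) (n : ℕ) : L d k r (uniformCube d) (Fin n) ≠ ∞ :=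
  ne_top_of_le_ne_top (by simp) (L_le hk r n)

lemma EH_eq {d k : ℕ} (hk : 1 ≤ k) (r : ℝ) (n : ℕ) :
    EH d k r n = (L d k r (uniformCube d) (Fin n)).toReal := by
  unfold EH L
  rw [integral_eq_lintegral_of_nonneg_ae]
  · simp
  · exact Filter.Eventually.of_forall fun x => by simp
  · exact ((measurable_of_countable (fun n : ℕ => (n : ℝ))).comp
      (measurable_maxColorable hk r)).aestronglyMeasurable

lemma L_tail {d k : ℕ} (hk : 1 ≤ k) (r : ℝ) (n : ℕ) :
    L d k r (uniformCube d) (Fin n) = ∫⁻ x : Fin (n + 1) → E d,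
      (maxColorable d k r (Finset.image (fun i : Fin n => x i.succ) Finset.univ) : ℝ≥0∞)
      ∂(Measure.pi fun _ => uniformCube d) := by
  unfold L
  have h := (measurePreserving_piFinSuccAbove (α := fun _ : Fin (n + 1) => E d)
    (fun _ => uniformCube d) 0)
  have h2 : MeasurePreserving (Prod.snd : E d × (Fin n → E d) → _)
    ((uniformCube d).prod (Measure.pi fun _ => uniformCube d)) (Measure.pi fun _ => uniformCube d) :=
    measurePreserving_snd
  rw [← (h2.comp h).lintegral_comp (measurable_N hk r)]
  rfl

lemma L_succ {d k : ℕ} (hk : 1 ≤ k) (r : ℝ) (n : ℕ) :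
    L d k r (uniformCube d) (Fin n) ≤ L d k r (uniformCube d) (Fin (n + 1)) ∧
    L d k r (uniformCube d) (Fin (n + 1)) ≤ L d k r (uniformCube d) (Fin n) + 1 := by
  have key : ∀ x : Fin (n + 1) → E d, Finset.image x Finset.univ =
      insert (x 0) (Finset.image (fun i : Fin n => x i.succ) Finset.univ) := by
    intro x
    ext u
    simp [Fin.exists_fin_succ, eq_comm]
  constructor
  · rw [L_tail hk]
    unfold L
    refine lintegral_mono fun x => ?_
    have := maxColorable_mono hk r (Finset.subset_insert (x 0)
      (Finset.image (fun i : Fin n => x i.succ) Finset.univ))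
    rw [← key] at this
    exact Nat.cast_le.2 this
  · rw [L_tail hk r n]
    unfold L
    calc _ ≤ ∫⁻ x : Fin (n + 1) → E d,
        ((maxColorable d k r (Finset.image (fun i : Fin n => x i.succ) Finset.univ) : ℝ≥0∞) + 1)
        ∂(Measure.pi fun _ => uniformCube d) := by
          refine lintegral_mono fun x => ?_
          have := maxColorable_insert hk r (x 0)
            (Finset.image (fun i : Fin n => x i.succ) Finset.univ)
          rw [← key] at this
          exact (Nat.cast_le.2 this).trans_eq (by push_cast; rfl)
      _ = _ := by
          rw [lintegral_add_right _ measurable_const]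
          simp

lemma EH_lip {d k : ℕ} (hk : 1 ≤ k) (r : ℝ) (n m : ℕ) :
    |EH d k r m - EH d k r n| ≤ |(m : ℝ) - n| := by
  have h1 : ∀ n, EH d k r n ≤ EH d k r (n + 1) ∧ EH d k r (n + 1) ≤ EH d k r n + 1 := by
    intro n
    obtain ⟨h1, h2⟩ := L_succ (d := d) hk r n
    rw [EH_eq hk, EH_eq hk]
    refine ⟨ENNReal.toReal_mono (L_ne_top hk r _) h1, ?_⟩
    have := ENNReal.toReal_mono (by simp [L_ne_top hk r n]) h2
    rwa [ENNReal.toReal_add (L_ne_top hk r n) (by simp)] at this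
  have h2 : ∀ n j, EH d k r n ≤ EH d k r (n + j) ∧ EH d k r (n + j) ≤ EH d k r n + j := by
    intro n j
    induction j with
    | zero => simp
    | succ j ih =>
      have := h1 (n + j)
      push_cast
      rw [← add_assoc]
      constructor <;> linarith
  rcases le_total n m with h | h
  · obtain ⟨j, rfl⟩ := Nat.exists_eq_add_of_le h
    have := h2 n j
    push_cast
    rw [abs_of_nonneg (by linarith), abs_of_nonneg (by simp)]
    linarith
  · obtain ⟨j, rfl⟩ := Nat.exists_eq_add_of_le h
    have := h2 m j
    push_cast
    rw [abs_of_nonpos (by linarith), abs_of_nonpos (by simp)]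
    linarith

/-- real Poisson weights -/
noncomputable def p (l : ℝ) (n : ℕ) : ℝ := Real.exp (-l) * l ^ n / n.factorial

lemma p_nonneg {l : ℝ} (hl : 0 ≤ l) (n : ℕ) : 0 ≤ p l n := by unfold p; positivity

lemma hasSum_p {l : ℝ} (hl : 0 ≤ l) : HasSum (p l) 1 := hasSum_one_poissonMeasure ⟨l, hl⟩

lemma p_succ (l : ℝ) (n : ℕ) : p l (n + 1) * (n + 1) = l * p l n := by
  unfold p
  rw [Nat.factorial_succ]
  push_cast
  field_simp
  ring

lemma hasSum_p1 {l : ℝ} (hl : 0 ≤ l) : HasSum (fun n : ℕ => p l n * n) l := by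
  rw [← hasSum_nat_add_iff' 1]
  simpa [p_succ] using (hasSum_p hl).mul_left l

lemma hasSum_p2 {l : ℝ} (hl : 0 ≤ l) : HasSum (fun n : ℕ => p l n * (n * (n - 1))) (l * l) := by
  rw [← hasSum_nat_add_iff' 1]
  have h := (hasSum_p1 hl).mul_left l
  have : (fun n : ℕ => p l (n + 1) * (((n + 1 : ℕ) : ℝ) * (((n + 1 : ℕ) : ℝ) - 1))) =
      fun n : ℕ => l * (p l n * n) := by
    funext n
    rw [← mul_assoc l, ← p_succ]
    push_cast
    ring
  rw [this]
  simpa using h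

lemma hasSum_var {l : ℝ} (hl : 0 ≤ l) : HasSum (fun n : ℕ => p l n * (n - l) ^ 2) l := by
  have h := ((hasSum_p2 hl).add ((hasSum_p1 hl).mul_left (1 - 2 * l))).add
    ((hasSum_p hl).mul_left (l ^ 2))
  convert h using 1
  · funext n; ring
  · ring

lemma EF_eq_tsum {d k : ℕ} {lam t : ℝ} (h : 0 ≤ lam * t ^ d) :
    EF d k lam t = ∑' n, p (lam * t ^ d) n * EH d k (1 / t) n := by
  unfold EF poissonPMFReal p
  simp [Real.coe_toNNReal _ h]

lemma EH_nonneg (d k : ℕ) (r : ℝ) (n : ℕ) : 0 ≤ EH d k r n :=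
  integral_nonneg fun _ => by simp

lemma EH_le {d k : ℕ} (hk : 1 ≤ k) (r : ℝ) (n : ℕ) : EH d k r n ≤ n := by
  rw [EH_eq hk]
  simpa using ENNReal.toReal_mono (by simp) (L_le (d := d) hk r n)

lemma summable_EF {d k : ℕ} (hk : 1 ≤ k) {l r : ℝ} (hl : 0 ≤ l) :
    Summable fun n => p l n * EH d k r n := by
  refine Summable.of_nonneg_of_le (fun n => mul_nonneg (p_nonneg hl n) (EH_nonneg d k r n))
    (fun n => ?_) (hasSum_p1 hl).summable
  exact mul_le_mul_of_nonneg_left (EH_le hk r n) (p_nonneg hl n)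

lemma EFe_eq {d k : ℕ} (hk : 1 ≤ k) {lam t : ℝ} (h : 0 ≤ lam * t ^ d) :
    EFe d k lam t = ENNReal.ofReal (EF d k lam t) := by
  rw [EF_eq_tsum h, ENNReal.ofReal_tsum_of_nonneg
    (fun n => mul_nonneg (p_nonneg h n) (EH_nonneg d k _ n)) (summable_EF hk h), EFe]
  refine tsum_congr fun n => ?_
  rw [ENNReal.ofReal_mul (p_nonneg h n), EH_eq hk, ENNReal.ofReal_toReal (L_ne_top hk _ n)]
  rfl

lemma EF_nonneg {d k : ℕ} {lam t : ℝ} (h : 0 ≤ lam * t ^ d) : 0 ≤ EF d k lam t := by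
  rw [EF_eq_tsum h]
  exact tsum_nonneg fun n => mul_nonneg (p_nonneg h n) (EH_nonneg d k _ n)

/-- de-Poissonization bound -/
lemma EF_sub_EH {d k : ℕ} (hk : 1 ≤ k) {lam t : ℝ} (n : ℕ) (hn : 0 < n)
    (h : lam * t ^ d = n) : |EF d k lam t - EH d k (1 / t) n| ≤ √n := by
  have h0 : (0 : ℝ) ≤ n := by positivity
  have h1 : HasSum (fun m => p n m * EH d k (1 / t) m - p n m * EH d k (1 / t) n)
      (EF d k lam t - 1 * EH d k (1 / t) n) := by
    rw [EF_eq_tsum (by rw [h]; exact h0), h]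
    exact (summable_EF hk h0).hasSum.sub ((hasSum_p h0).mul_right _)
  have hs : 0 < √(n : ℝ) := Real.sqrt_pos.2 (by positivity)
  have h2 : HasSum (fun m : ℕ => p n m * (√n / 2) + p n m * (m - n) ^ 2 * (1 / (2 * √n)))
      (1 * (√n / 2) + n * (1 / (2 * √n))) :=
    ((hasSum_p h0).mul_right _).add ((hasSum_var h0).mul_right _)
  have h3 : 1 * (√n / 2) + n * (1 / (2 * √n)) = √(n : ℝ) := by
    field_simp
    rw [Real.sq_sqrt h0]; ring
  rw [h3] at h2
  rw [one_mul] at h1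
  rw [← h1.tsum_eq, ← Real.norm_eq_abs]
  refine tsum_of_norm_bounded h2 fun m => ?_
  rw [← mul_sub, Real.norm_eq_abs, abs_mul, abs_of_nonneg (p_nonneg h0 m)]
  have h4 : p n m * (√n / 2) + p n m * (m - n) ^ 2 * (1 / (2 * √n)) =
      p n m * (√n / 2 + (m - n) ^ 2 * (1 / (2 * √n))) := by ring
  rw [h4]
  refine mul_le_mul_of_nonneg_left ((EH_lip hk _ n m).trans ?_) (p_nonneg h0 m)
  have h5 : √(n : ℝ) / 2 + (m - n) ^ 2 * (1 / (2 * √n)) - |(m : ℝ) - n| =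
      (√n - |(m : ℝ) - n|) ^ 2 / (2 * √n) := by
    field_simp
    rw [← sq_abs ((m : ℝ) - n)]
    ring
  have h6 : 0 ≤ (√n - |(m : ℝ) - n|) ^ 2 / (2 * √n) := by positivity
  linarith

lemma EFe_mono {d k : ℕ} (hk : 1 ≤ k) {lam T s : ℝ} (hlam : 0 ≤ lam) (hT : 0 < T)
    (hs : 0 < s) (hs1 : s ≤ 1) : EFe d k lam (T * s) ≤ EFe d k lam T := by
  classical
  rw [← EFe_box hk lam T hlam hT 0 s hs hs1, EFe]
  · refine ENNReal.tsum_le_tsum fun n => mul_le_mul_right ?_ _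
    refine lintegral_mono fun x => ?_
    exact Nat.cast_le.2 <| maxColorable_mono hk (1 / T) (Finset.filter_subset _ _)
  · rw [unitCube_eq_box]
    intro x hx i
    have := hx i
    exact ⟨this.1, by have := this.2; linarith⟩

lemma exists_cell (m : ℕ) (hm : 1 ≤ m) (y : ℝ) (hy : y ∈ Set.Icc (0 : ℝ) 1) :
    ∃ j : Fin m, y ∈ Set.Icc ((j : ℝ) / m) ((j : ℝ) / m + 1 / m) := by
  have hm' : (0 : ℝ) < m := by exact_mod_cast hm
  have hfl : ((⌊y * m⌋₊ : ℕ) : ℝ) ≤ y * m := Nat.floor_le (mul_nonneg hy.1 hm'.le)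
  rcases eq_or_lt_of_le hy.2 with rfl | hlt
  · refine ⟨⟨m - 1, by omega⟩, ?_⟩
    simp only [Set.mem_Icc]
    rw [Nat.cast_sub hm]
    rw [← add_div, div_le_one hm', le_div_iff₀ hm']
    simp
  · have hl : ⌊y * m⌋₊ < m := by
      rw [Nat.floor_lt (mul_nonneg hy.1 hm'.le)]
      nlinarith
    refine ⟨⟨_, hl⟩, ?_⟩
    simp only [Set.mem_Icc]
    rw [← add_div, div_le_iff₀ hm', le_div_iff₀ hm']
    exact ⟨hfl, (Nat.lt_floor_add_one _).le⟩

lemma EFe_sub {d k : ℕ} (hk : 1 ≤ k) {lam T : ℝ} (hlam : 0 ≤ lam) (hT : 0 < T)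
    (m : ℕ) (hm : 1 ≤ m) : EFe d k lam T ≤ (m : ℝ≥0∞) ^ d * EFe d k lam (T * (1 / m)) := by
  classical
  have hm' : (0 : ℝ) < m := by exact_mod_cast hm
  let a : (Fin d → Fin m) → E d := fun j => WithLp.toLp 2 fun i => ((j i : ℕ) : ℝ) / m
  have hsub : ∀ j, Box (a j) (1 / m) ⊆ unitCube d := by
    intro j x hx i
    have h1 := hx i
    have h2 : ((j i : ℕ) : ℝ) + 1 ≤ m := by exact_mod_cast (j i).2
    simp only [a, Set.mem_Icc] at h1
    refine ⟨le_trans (by positivity) h1.1, h1.2.trans ?_⟩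
    rw [← add_div, div_le_one hm']
    exact h2
  have hcov : ∀ x ∈ unitCube d, ∃ j, x ∈ Box (a j) (1 / m) := by
    intro x hx
    choose j hj using fun i => exists_cell m hm (x i) (hx i)
    exact ⟨j, hj⟩
  have h1 : ∀ n, L d k (1 / T) (uniformCube d) (Fin n) ≤
      ∑ j, ∫⁻ x : Fin n → E d, (maxColorable d k (1 / T)
      ((Finset.image x Finset.univ).filter (· ∈ Box (a j) (1 / m))) : ℝ≥0∞)
      ∂(Measure.pi fun _ => uniformCube d) := by
    intro n
    rw [← lintegral_finsetSum]
    · refine lintegral_mono_ae ?_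
      have hae : ∀ᵐ x : Fin n → E d ∂(Measure.pi fun _ => uniformCube d),
          ∀ i, x i ∈ unitCube d := by
        rw [ae_all_iff]
        intro i
        have h := (measurePreserving_eval (fun _ : Fin n => uniformCube d) i)
        exact h.quasiMeasurePreserving.ae (ae_restrict_mem (measurableSet_unitCube d))
      filter_upwards [hae] with x hx
      have := maxColorable_le_sum hk (1 / T) (Finset.image x Finset.univ)
        (fun j => Box (a j) (1 / m)) (by
          intro u hu
          obtain ⟨i, -, rfl⟩ := Finset.mem_image.1 hu
          exact hcov _ (hx i))
      exact_mod_cast this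
    · intro j _
      exact (measurable_of_countable (fun n : ℕ => (n : ℝ≥0∞))).comp
        (measurable_maxColorable_filter hk _ (measurableSet_box _ _))
  calc EFe d k lam T ≤ ∑' n, ∑ j, P (lam * T ^ d) n * ∫⁻ x : Fin n → E d, (maxColorable d k (1 / T)
      ((Finset.image x Finset.univ).filter (· ∈ Box (a j) (1 / m))) : ℝ≥0∞)
      ∂(Measure.pi fun _ => uniformCube d) := by
        refine ENNReal.tsum_le_tsum fun n => ?_
        rw [← Finset.mul_sum]
        exact mul_le_mul_right (h1 n) _
    _ = ∑ j : Fin d → Fin m, EFe d k lam (T * (1 / m)) := by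
        rw [Summable.tsum_finsetSum (fun _ _ => ENNReal.summable)]
        refine Finset.sum_congr rfl fun j _ => ?_
        exact EFe_box hk lam T hlam hT (a j) (1 / m) (by positivity)
          (by rw [div_le_one hm']; exact_mod_cast hm) (hsub j)
    _ = _ := by simp

end ColorAux

namespace ColorAux
open scoped ENNReal

lemma EF_le {d k : ℕ} (hk : 1 ≤ k) {lam T t : ℝ} (hlam : 0 < lam) (hT : 0 < T) (ht : 0 < t)
    (m : ℕ) (hm : 1 ≤ m) (hTm : T ≤ m * t) : EF d k lam T ≤ (m : ℝ) ^ d * EF d k lam t := by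
  have hm' : (0 : ℝ) < m := by exact_mod_cast hm
  have h1 := EFe_sub (d := d) hk hlam.le hT m hm
  have h2 : T * (1 / m) = t * (T / (m * t)) := by field_simp
  have h3 := EFe_mono (d := d) hk hlam.le ht (s := T / (m * t)) (by positivity)
    ((div_le_one (by positivity)).2 hTm)
  rw [← h2] at h3
  have h4 : EFe d k lam T ≤ (m : ℝ≥0∞) ^ d * EFe d k lam t := h1.trans (mul_le_mul_right h3 _)
  rw [EFe_eq hk (by positivity), EFe_eq hk (by positivity), ← ENNReal.ofReal_natCast,
    ← ENNReal.ofReal_pow hm'.le, ← ENNReal.ofReal_mul (by positivity)] at h4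
  exact (ENNReal.ofReal_le_ofReal_iff (mul_nonneg (by positivity) (EF_nonneg (by positivity)))).1 h4

lemma Fbar_nonneg {d k : ℕ} {lam t : ℝ} (hlam : 0 < lam) (ht : 0 < t) : 0 ≤ Fbar d k lam t :=
  div_nonneg (EF_nonneg (by positivity)) (by positivity)

lemma Fbar_le {d k : ℕ} (hk : 1 ≤ k) {lam T t : ℝ} (hlam : 0 < lam) (hT : 0 < T) (ht : 0 < t) :
    Fbar d k lam T ≤ (1 + t / T) ^ d * Fbar d k lam t := by
  have hm1 : 1 ≤ ⌈T / t⌉₊ := Nat.one_le_iff_ne_zero.2 (Nat.ceil_pos.2 (by positivity)).ne'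
  have h1 := EF_le (d := d) hk hlam hT ht ⌈T / t⌉₊ hm1 ((div_le_iff₀ ht).1 (Nat.le_ceil _))
  have h2 : (⌈T / t⌉₊ : ℝ) ≤ T / t + 1 := (Nat.ceil_lt_add_one (by positivity)).le
  have h3 : EF d k lam T ≤ (T / t + 1) ^ d * EF d k lam t :=
    h1.trans (mul_le_mul_of_nonneg_right (pow_le_pow_left₀ (by positivity) h2 d)
      (EF_nonneg (by positivity)))
  unfold Fbar
  rw [div_le_iff₀ (by positivity)]
  refine h3.trans_eq ?_
  have h4 : T / t + 1 = (1 + t / T) * T / t := by field_simp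
  rw [h4, div_pow, mul_pow]
  field_simp

lemma tendsto_Fbar {d k : ℕ} (hk : 1 ≤ k) {lam : ℝ} (hlam : 0 < lam) :
    Tendsto (Fbar d k lam) atTop (nhds (aConst d k lam)) := by
  have hbdd : BddBelow {x : ℝ | ∃ t : ℝ, 0 < t ∧ x = Fbar d k lam t} := by
    refine ⟨0, ?_⟩
    rintro x ⟨t, ht, rfl⟩
    exact Fbar_nonneg hlam ht
  rw [tendsto_order]
  constructor
  · intro b hb
    filter_upwards [eventually_gt_atTop 0] with T hT
    exact hb.trans_le (csInf_le hbdd ⟨T, hT, rfl⟩)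
  · intro b hb
    have hne : {x : ℝ | ∃ t : ℝ, 0 < t ∧ x = Fbar d k lam t}.Nonempty := ⟨_, 1, one_pos, rfl⟩
    obtain ⟨_, ⟨t, ht, rfl⟩, h⟩ := exists_lt_of_csInf_lt hne hb
    have h1 : Tendsto (fun T : ℝ => (1 + t / T) ^ d * Fbar d k lam t) atTop
        (nhds ((1 + 0) ^ d * Fbar d k lam t)) :=
      ((tendsto_const_nhds.add (tendsto_const_nhds.div_atTop tendsto_id)).pow d).mul_const _
    rw [add_zero, one_pow, one_mul] at h1
    filter_upwards [eventually_gt_atTop 0, h1.eventually_lt_const h] with T hT hlt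
    exact (Fbar_le hk hlam hT ht).trans_lt hlt

end ColorAux

/-- convergence of the expected coloring ratio for the binomial
model: `lim_{n→∞} E[H_{k,(ν/n)^{1/d}}(n)]/n = a_{k,ν}`. -/
theorem tendsto_EH_div (d k : ℕ) (hd : 1 ≤ d) (hk : 1 ≤ k) (ν : ℝ) (hν : 0 < ν) :
    Tendsto (fun n : ℕ => EH d k ((ν / n) ^ ((1 : ℝ) / d)) n / n) atTop
      (nhds (aConst d k ν)) := by
  have hd0 : (d : ℝ) ≠ 0 := by positivity
  set T : ℕ → ℝ := fun n => ((n : ℝ) / ν) ^ ((1 : ℝ) / d) with hT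
  have hTt : Tendsto T atTop atTop :=
    (tendsto_rpow_atTop (by positivity)).comp (tendsto_natCast_atTop_atTop.atTop_div_const hν)
  have h1 := (ColorAux.tendsto_Fbar (d := d) hk hν).comp hTt
  have h2 : Tendsto (fun n : ℕ => EH d k ((ν / n) ^ ((1 : ℝ) / d)) n / n - Fbar d k ν (T n))
      atTop (nhds 0) := by
    have h3 : Tendsto (fun n : ℕ => (√(n : ℝ))⁻¹) atTop (nhds 0) :=
      (Real.tendsto_sqrt_atTop.comp tendsto_natCast_atTop_atTop).inv_tendsto_atTop
    refine squeeze_zero_norm' ?_ h3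
    filter_upwards [eventually_gt_atTop 0] with n hn
    have hn' : (0 : ℝ) < n := by exact_mod_cast hn
    have h4 : ν * T n ^ d = n := by
      rw [hT]
      simp only
      rw [← Real.rpow_natCast, ← Real.rpow_mul (by positivity), one_div, inv_mul_cancel₀ hd0,
        Real.rpow_one]
      field_simp
    have h5 : 1 / T n = (ν / n) ^ ((1 : ℝ) / d) := by
      rw [hT]
      simp only
      rw [one_div, ← Real.inv_rpow (by positivity), inv_div]
    have h6 := ColorAux.EF_sub_EH (d := d) hk n hn h4
    rw [h5] at h6
    unfold Fbar
    rw [h4, ← sub_div, Real.norm_eq_abs, abs_div, abs_sub_comm, abs_of_pos hn', div_le_iff₀ hn']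
    refine h6.trans_eq ?_
    have : (n : ℝ) = √n * √n := (Real.mul_self_sqrt hn'.le).symm
    have hs : √(n : ℝ) ≠ 0 := (Real.sqrt_pos.2 hn').ne'
    rw [eq_inv_mul_iff_mul_eq₀ hs]
    exact this.symm
  have h7 := h2.add h1
  rw [zero_add] at h7
  refine h7.congr fun n => ?_
  simp
end

section
/- Superadditive expectation bound: for dimension d ≥ 1, every k ≥ 1, every λ > 0, and all 0 < s ≤ t, one has E[F_{k,λ}(t)] ≥ ⌊t/(s+1)⌋^d · E[F_{k,λ}(s)]. -/
open MeasureTheory ProbabilityTheory Filter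

section Helpers

/-- `S` is properly `k`-colorable at scale `r`. -/
def PropCol (d k : ℕ) (r : ℝ) (S : Finset (EuclideanSpace ℝ (Fin d))) : Prop :=
  ∃ c : EuclideanSpace ℝ (Fin d) → Fin k,
      ∀ u ∈ S, ∀ v ∈ S, u ≠ v → dist u v ≤ r → c u ≠ c v

lemma mc_bdd (d k : ℕ) (r : ℝ) (V : Finset (EuclideanSpace ℝ (Fin d))) :
    BddAbove {m : ℕ | ∃ S : Finset (EuclideanSpace ℝ (Fin d)), S ⊆ V ∧ S.card = m ∧
      ∃ c : EuclideanSpace ℝ (Fin d) → Fin k,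
        ∀ u ∈ S, ∀ v ∈ S, u ≠ v → dist u v ≤ r → c u ≠ c v} := by
  refine ⟨V.card, ?_⟩
  rintro m ⟨S, hS, rfl, -⟩
  exact Finset.card_le_card hS

lemma le_mc {d k : ℕ} {r : ℝ} {V S : Finset (EuclideanSpace ℝ (Fin d))} (hS : S ⊆ V)
    (h : PropCol d k r S) : S.card ≤ maxColorable d k r V :=
  le_csSup (mc_bdd d k r V) ⟨S, hS, rfl, h⟩

lemma mc_attained {d k : ℕ} (hk : 1 ≤ k) (r : ℝ) (V : Finset (EuclideanSpace ℝ (Fin d))) :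
    ∃ S ⊆ V, S.card = maxColorable d k r V ∧ PropCol d k r S := by
  have h := Nat.sSup_mem (s := {m : ℕ | ∃ S : Finset (EuclideanSpace ℝ (Fin d)), S ⊆ V ∧
      S.card = m ∧ ∃ c : EuclideanSpace ℝ (Fin d) → Fin k,
        ∀ u ∈ S, ∀ v ∈ S, u ≠ v → dist u v ≤ r → c u ≠ c v})
    ⟨0, ∅, by simp, by simp, fun _ => ⟨0, hk⟩, by simp⟩ (mc_bdd d k r V)
  obtain ⟨S, h1, h2, h3⟩ := h
  exact ⟨S, h1, h2, h3⟩

lemma mc_le_card {d k : ℕ} (hk : 1 ≤ k) (r : ℝ) (V : Finset (EuclideanSpace ℝ (Fin d))) :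
    maxColorable d k r V ≤ V.card := by
  obtain ⟨S, h1, h2, -⟩ := mc_attained hk r V
  rw [← h2]; exact Finset.card_le_card h1

lemma mc_image {d k : ℕ} (hk : 1 ≤ k) {r r' : ℝ} (V : Finset (EuclideanSpace ℝ (Fin d)))
    (φ : EuclideanSpace ℝ (Fin d) → EuclideanSpace ℝ (Fin d)) (hφ : Function.Injective φ)
    (hr : ∀ u v, dist (φ u) (φ v) ≤ r ↔ dist u v ≤ r') :
    maxColorable d k r (V.image φ) = maxColorable d k r' V := by
  apply le_antisymm
  · obtain ⟨S, h1, h2, c, hc⟩ := mc_attained hk r (V.image φ)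
    obtain ⟨T, hT, rfl⟩ := Finset.subset_image_iff.1 h1
    rw [← h2, Finset.card_image_of_injective _ hφ]
    refine le_mc hT ⟨c ∘ φ, fun u hu v hv huv hd => ?_⟩
    exact hc _ (Finset.mem_image_of_mem _ hu) _ (Finset.mem_image_of_mem _ hv) (hφ.ne huv)
      ((hr u v).2 hd)
  · obtain ⟨S, h1, h2, c, hc⟩ := mc_attained hk r' V
    rw [← h2, ← Finset.card_image_of_injective S hφ]
    refine le_mc (Finset.image_subset_image h1) ⟨c ∘ Function.invFun φ, ?_⟩
    intro u hu v hv huv hd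
    obtain ⟨u, hu', rfl⟩ := Finset.mem_image.1 hu
    obtain ⟨v, hv', rfl⟩ := Finset.mem_image.1 hv
    simp only [Function.comp, Function.leftInverse_invFun hφ _]
    exact hc u hu' v hv' (fun h => huv (h ▸ rfl)) ((hr u v).1 hd)

open Classical in
lemma mc_superadd {d k : ℕ} (hk : 1 ≤ k) (r : ℝ) (V : Finset (EuclideanSpace ℝ (Fin d)))
    {ι : Type*} [Fintype ι] (Q : ι → Set (EuclideanSpace ℝ (Fin d)))
    (hQ : ∀ i j, i ≠ j → ∀ u ∈ Q i, ∀ v ∈ Q j, r < dist u v)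
    (hr : 0 ≤ r) :
    ∑ j, maxColorable d k r (V.filter (· ∈ Q j)) ≤ maxColorable d k r V := by
  choose S h1 h2 c hc using fun j => mc_attained hk r (V.filter (· ∈ Q j))
  have hSQ : ∀ j, ∀ u ∈ S j, u ∈ Q j := fun j u hu => (Finset.mem_filter.1 (h1 j hu)).2
  have huniq : ∀ i j u, u ∈ Q i → u ∈ Q j → i = j := by
    intro i j u hi hj
    by_contra hne
    have := hQ i j hne u hi u hj
    rw [dist_self] at this
    linarith
  have hdisj : Set.PairwiseDisjoint (↑(Finset.univ : Finset ι)) S := by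
    intro i _ j _ hij
    rw [Function.onFun, Finset.disjoint_left]
    intro u hu hv
    exact hij (huniq i j u (hSQ i u hu) (hSQ j u hv))
  rw [← Finset.sum_congr rfl (fun j _ => h2 j), ← Finset.card_biUnion hdisj]
  refine le_mc ?_ ⟨fun u => if h : ∃ j, u ∈ Q j then c h.choose u else ⟨0, hk⟩, ?_⟩
  · intro u hu
    obtain ⟨j, -, hj⟩ := Finset.mem_biUnion.1 hu
    exact (Finset.mem_filter.1 (h1 j hj)).1
  · intro u hu v hv huv hd
    obtain ⟨i, -, hi⟩ := Finset.mem_biUnion.1 hu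
    obtain ⟨j, -, hj⟩ := Finset.mem_biUnion.1 hv
    have hij : i = j := by
      by_contra hne
      exact absurd hd (not_le.2 (hQ i j hne u (hSQ i u hi) v (hSQ j v hj)))
    subst hij
    have eu : ∃ j, u ∈ Q j := ⟨i, hSQ i u hi⟩
    have ev : ∃ j, v ∈ Q j := ⟨i, hSQ i v hj⟩
    have e1 : eu.choose = i := huniq _ _ u eu.choose_spec (hSQ i u hi)
    have e2 : ev.choose = i := huniq _ _ v ev.choose_spec (hSQ i v hj)
    simp only [dif_pos eu, dif_pos ev, e1, e2]
    exact hc i u hi v hj huv hd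

open Classical in
lemma mc_image_eq_sup {d k : ℕ} (hk : 1 ≤ k) (r : ℝ) {ι : Type} [Fintype ι]
    (x : ι → EuclideanSpace ℝ (Fin d)) :
    maxColorable d k r (Finset.image x Finset.univ) =
      (Finset.univ : Finset (Finset ι × (ι → Fin k))).sup (fun p =>
        if ∀ i ∈ p.1, ∀ j ∈ p.1, i ≠ j → x i ≠ x j ∧ (dist (x i) (x j) ≤ r → p.2 i ≠ p.2 j)
        then p.1.card else 0) := by
  apply le_antisymm
  · obtain ⟨S, h1, h2, c, hc⟩ := mc_attained hk r (Finset.image x Finset.univ)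
    have hsurj : Set.SurjOn x Set.univ (S : Set (EuclideanSpace ℝ (Fin d))) := by
      intro u hu
      obtain ⟨i, -, hi⟩ := Finset.mem_image.1 (h1 hu)
      exact ⟨i, trivial, hi⟩
    obtain ⟨T, -, hT⟩ := hsurj.exists_bijOn_subset
    have hcard : T.toFinset.card = S.card := by
      rw [← Finset.card_image_of_injOn (f := x) (s := T.toFinset) (by simpa using hT.injOn)]
      congr 1
      apply Finset.coe_injective
      simpa using hT.image_eq
    rw [← h2, ← hcard]
    refine le_trans ?_ (Finset.le_sup (b := (T.toFinset, c ∘ x)) (Finset.mem_univ _))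
    rw [if_pos]
    intro i hi j hj hij
    simp only [Set.mem_toFinset] at hi hj
    have hne : x i ≠ x j := fun h => hij (hT.injOn hi hj h)
    exact ⟨hne, fun hd => hc _ (hT.mapsTo hi) _ (hT.mapsTo hj) hne hd⟩
  · refine Finset.sup_le ?_
    rintro ⟨T, c⟩ -
    split_ifs with h
    · have hinj : Set.InjOn x T := by
        intro i hi j hj hij
        by_contra hne
        exact (h i hi j hj hne).1 hij
      simp only
      rw [← Finset.card_image_of_injOn hinj]
      refine le_mc (Finset.image_subset_image (Finset.subset_univ _))
        ⟨fun u => if h : ∃ i, i ∈ T ∧ x i = u then c h.choose else ⟨0, hk⟩, ?_⟩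
      intro u hu v hv huv hd
      obtain ⟨i, hi, rfl⟩ := Finset.mem_image.1 hu
      obtain ⟨j, hj, rfl⟩ := Finset.mem_image.1 hv
      have eu : ∃ i', i' ∈ T ∧ x i' = x i := ⟨i, hi, rfl⟩
      have ev : ∃ i', i' ∈ T ∧ x i' = x j := ⟨j, hj, rfl⟩
      have e1 : eu.choose = i := hinj eu.choose_spec.1 hi eu.choose_spec.2
      have e2 : ev.choose = j := hinj ev.choose_spec.1 hj ev.choose_spec.2
      simp only [dif_pos eu, dif_pos ev, e1, e2]
      exact (h i hi j hj (fun h => huv (h ▸ rfl))).2 hd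
    · simp

lemma measurable_mc {d k : ℕ} (hk : 1 ≤ k) (r : ℝ) {ι : Type} [Fintype ι] :
    Measurable (fun x : ι → EuclideanSpace ℝ (Fin d) =>
      maxColorable d k r (Finset.image x Finset.univ)) := by
  classical
  simp_rw [mc_image_eq_sup hk]
  have key : ∀ s : Finset (Finset ι × (ι → Fin k)),
      Measurable (fun x : ι → EuclideanSpace ℝ (Fin d) => s.sup (fun p =>
        if ∀ i ∈ p.1, ∀ j ∈ p.1, i ≠ j → x i ≠ x j ∧ (dist (x i) (x j) ≤ r → p.2 i ≠ p.2 j)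
        then p.1.card else 0)) := by
    intro s
    induction s using Finset.induction_on with
    | empty => simp
    | insert a s ha ih =>
      simp only [Finset.sup_insert]
      refine Measurable.sup ?_ ih
      refine Measurable.ite ?_ measurable_const measurable_const
      simp only [Set.ofPred_forall]
      refine MeasurableSet.iInter fun i => MeasurableSet.iInter fun _ => MeasurableSet.iInter
        fun j => MeasurableSet.iInter fun _ => MeasurableSet.iInter fun _ => ?_
      refine MeasurableSet.inter ?_ ?_
      · exact (measurableSet_eq_fun (measurable_pi_apply i) (measurable_pi_apply j)).compl
      · by_cases h : a.2 i ≠ a.2 j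
        · simp only [h, not_false_eq_true, implies_true, ne_eq]
          exact MeasurableSet.const True
        · simp only [h, imp_false]
          exact (measurableSet_le ((measurable_pi_apply i).dist (measurable_pi_apply j))
            measurable_const).compl
  exact key _

lemma lintegral_thin {E : Type} [MeasurableSpace E] (μ ν : Measure E) [IsProbabilityMeasure μ]
    [IsProbabilityMeasure ν] (Q : Set E) (hQ : MeasurableSet Q) (φ : E → E) (hφ : Measurable φ)
    (p : ENNReal) (hp : μ.restrict Q = p • ν.map φ) (n : ℕ) (A : Finset (Fin n))
    (F : (A → E) → ENNReal) (hF : Measurable F) :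
    ∫⁻ x in (Set.univ.pi fun i : Fin n => if i ∈ A then Q else Qᶜ), F (fun i => x i)
      ∂(Measure.pi fun _ => μ) =
    (μ Qᶜ) ^ (n - A.card) * p ^ A.card *
      ∫⁻ y : A → E, F (fun i => φ (y i)) ∂(Measure.pi fun _ => ν) := by
  classical
  rw [Measure.restrict_pi_pi]
  have h1 := (measurePreserving_piEquivPiSubtypeProd (α := fun _ : Fin n => E)
    (fun i => μ.restrict (if i ∈ A then Q else Qᶜ)) (· ∈ A))
  have hinst : (Subtype.fintype (· ∈ A) : Fintype {i // i ∈ A}) = Finset.fintypeCoeSort A :=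
    Subsingleton.elim _ _
  rw [hinst] at h1
  have h2 := h1.lintegral_comp (f := fun z : (({i // i ∈ A}) → E) × (({i // i ∉ A}) → E) => F z.1)
    (hF.comp measurable_fst)
  have h3 : ∀ x : Fin n → E, ((MeasurableEquiv.piEquivPiSubtypeProd (fun _ : Fin n => E)
    (· ∈ A)) x).1 = fun i : A => x i := fun x => rfl
  simp only [h3] at h2
  rw [h2, lintegral_prod (fun z : (({i // i ∈ A}) → E) × (({i // i ∉ A}) → E) => F z.1)
    (hF.comp measurable_fst).aemeasurable]
  simp only [lintegral_const]
  rw [lintegral_mul_const _ hF]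
  have e1 : (fun i : {i // i ∈ A} => μ.restrict (if (i : Fin n) ∈ A then Q else Qᶜ)) =
      fun _ => p • ν.map φ := by
    funext i; rw [if_pos i.2, hp]
  have e2 : (fun i : {i // i ∉ A} => μ.restrict (if (i : Fin n) ∈ A then Q else Qᶜ)) =
      fun _ => μ.restrict Qᶜ := by
    funext i; rw [if_neg i.2]
  rw [e1, e2]
  have : IsFiniteMeasure (p • ν.map φ) := by rw [← hp]; infer_instance
  have e3 : Measure.pi (fun _ : {i // i ∈ A} => p • ν.map φ) =
      p ^ A.card • (Measure.pi fun _ : {i // i ∈ A} => ν).map (fun y i => φ (y i)) := by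
    refine Measure.pi_eq fun s hs => ?_
    have hm : Measurable (fun (y : {i // i ∈ A} → E) i => φ (y i)) := by fun_prop
    rw [Measure.smul_apply, Measure.map_apply hm (MeasurableSet.univ_pi hs)]
    have : (fun (y : {i // i ∈ A} → E) i => φ (y i)) ⁻¹' (Set.univ.pi s) =
        Set.univ.pi fun i => φ ⁻¹' (s i) := by ext y; simp
    rw [this, Measure.pi_pi]
    simp only [Measure.smul_apply, smul_eq_mul, Finset.prod_mul_distrib, Finset.prod_const]
    congr 1
    · simp
    · exact Finset.prod_congr rfl fun i _ => (Measure.map_apply hφ (hs i)).symm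
  rw [e3, lintegral_smul_measure, lintegral_map hF (by fun_prop), ← Set.pi_univ Set.univ,
    Measure.pi_pi]
  simp only [Measure.restrict_apply_univ, Finset.prod_const, smul_eq_mul]
  have e4 : (Finset.univ : Finset {i // i ∉ A}).card = n - A.card := by
    rw [Finset.card_univ, Fintype.card_subtype_compl]; simp
  rw [e4]
  ring

/-- ENNReal-valued expectation. -/
noncomputable def EHe (d k : ℕ) (r : ℝ) (n : ℕ) : ENNReal :=
  ∫⁻ x : Fin n → EuclideanSpace ℝ (Fin d),
    (maxColorable d k r (Finset.image x Finset.univ) : ENNReal)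
    ∂(Measure.pi fun _ => uniformCube d)

lemma measurable_mce {d k : ℕ} (hk : 1 ≤ k) (r : ℝ) {ι : Type} [Fintype ι] :
    Measurable (fun x : ι → EuclideanSpace ℝ (Fin d) =>
      (maxColorable d k r (Finset.image x Finset.univ) : ENNReal)) :=
  (measurable_from_top (f := fun n : ℕ => (n : ENNReal))).comp (measurable_mc hk r)

lemma unitCube_eq (d : ℕ) : unitCube d = (MeasurableEquiv.toLp 2 (Fin d → ℝ)).symm ⁻¹'
    (Set.Icc (fun _ => 0) (fun _ => 1)) := by
  ext x
  simp only [unitCube, Set.mem_preimage, Set.mem_Icc, Pi.le_def]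
  exact forall_and

lemma measurableSet_unitCube (d : ℕ) : MeasurableSet (unitCube d) := by
  rw [unitCube_eq]
  exact (MeasurableEquiv.measurable _) measurableSet_Icc

instance uniformCube_prob (d : ℕ) : IsProbabilityMeasure (uniformCube d) := by
  constructor
  rw [uniformCube, Measure.restrict_apply_univ, unitCube_eq,
    (EuclideanSpace.volume_preserving_symm_measurableEquiv_toLp (Fin d)).measure_preimage
      measurableSet_Icc.nullMeasurableSet, Real.volume_Icc_pi]
  simp

/-- Half-open cube with corner `a` and side `c`. -/
def hCube (d : ℕ) (a : EuclideanSpace ℝ (Fin d)) (c : ℝ) : Set (EuclideanSpace ℝ (Fin d)) :=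
  {x | ∀ i, x i ∈ Set.Ico (a i) (a i + c)}

lemma hCube_eq (d : ℕ) (a : EuclideanSpace ℝ (Fin d)) (c : ℝ) :
    hCube d a c = (MeasurableEquiv.toLp 2 (Fin d → ℝ)).symm ⁻¹'
      (Set.univ.pi fun i => Set.Ico (a i) (a i + c)) := by
  ext x
  simp only [hCube, Set.mem_preimage, Set.mem_pi, Set.mem_univ, true_imp_iff]
  rfl

lemma measurableSet_hCube (d : ℕ) (a : EuclideanSpace ℝ (Fin d)) (c : ℝ) :
    MeasurableSet (hCube d a c) := by
  rw [hCube_eq]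
  exact (MeasurableEquiv.measurable _) (MeasurableSet.univ_pi fun _ => measurableSet_Ico)

lemma uniformCube_eq_hCube (d : ℕ) : uniformCube d = volume.restrict (hCube d 0 1) := by
  refine Measure.restrict_congr_set ?_
  rw [hCube_eq, unitCube_eq]
  have h := (EuclideanSpace.volume_preserving_symm_measurableEquiv_toLp
    (Fin d)).quasiMeasurePreserving.preimage_ae_eq
    (Measure.univ_pi_Ico_ae_eq_Icc (μ := fun _ : Fin d => (volume : Measure ℝ))
      (f := fun _ => 0) (g := fun _ => 1))
  simpa using h.symm

lemma restrict_hCube (d : ℕ) (a : EuclideanSpace ℝ (Fin d)) (c : ℝ) (hc : 0 < c) 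
    (h : hCube d a c ⊆ unitCube d) :
    (uniformCube d).restrict (hCube d a c) =
      ENNReal.ofReal (c ^ d) • (uniformCube d).map (fun x => a + c • x) := by
  have hφ : Measurable (fun x : EuclideanSpace ℝ (Fin d) => a + c • x) := by fun_prop
  conv_lhs => rw [uniformCube, Measure.restrict_restrict_of_subset h]
  rw [uniformCube_eq_hCube]
  ext B hB
  rw [Measure.smul_apply, Measure.map_apply hφ hB, Measure.restrict_apply hB,
    Measure.restrict_apply (hφ hB)]
  have e : (fun x : EuclideanSpace ℝ (Fin d) => a + c • x) ⁻¹' B ∩ hCube d 0 1 =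
      (fun x => c • x) ⁻¹' ((fun x => a + x) ⁻¹' (B ∩ hCube d a c)) := by
    ext x
    simp only [hCube, Set.mem_inter_iff, Set.mem_preimage, Set.mem_ofPred_eq, Set.mem_Ico,
      PiLp.add_apply, PiLp.smul_apply, PiLp.zero_apply, smul_eq_mul, zero_add]
    refine and_congr_right fun _ => forall_congr' fun i => and_congr ?_ ?_
    · rw [le_add_iff_nonneg_right, mul_nonneg_iff_of_pos_left hc]
    · rw [add_lt_add_iff_left, mul_lt_iff_lt_one_right hc]
  rw [e, Measure.addHaar_preimage_smul _ hc.ne', measure_preimage_add, finrank_euclideanSpace_fin,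
    smul_eq_mul, ← mul_assoc, ← ENNReal.ofReal_mul (by positivity), abs_of_pos (by positivity),
    mul_inv_cancel₀ (by positivity)]
  simp

lemma EHe_fintype {d k : ℕ} (hk : 1 ≤ k) (r : ℝ) {n : ℕ} (A : Finset (Fin n)) :
    ∫⁻ y : A → EuclideanSpace ℝ (Fin d),
    (maxColorable d k r (Finset.image y Finset.univ) : ENNReal)
    ∂(Measure.pi fun _ => uniformCube d) = EHe d k r A.card := by
  rw [EHe]
  have h := measurePreserving_piCongrLeft (α := fun _ : A => EuclideanSpace ℝ (Fin d))
    (fun _ => uniformCube d) A.equivFin.symm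
  rw [← h.lintegral_comp (measurable_mce hk r)]
  refine lintegral_congr fun x => ?_
  congr 2
  ext u
  simp only [Finset.mem_image, Finset.mem_univ, true_and]
  constructor
  · rintro ⟨i, rfl⟩
    refine ⟨A.equivFin i, ?_⟩
    obtain ⟨j, rfl⟩ := A.equivFin.symm.surjective i
    simp [MeasurableEquiv.piCongrLeft, Equiv.piCongrLeft_apply]
  · rintro ⟨j, rfl⟩
    refine ⟨A.equivFin.symm j, ?_⟩
    simp [MeasurableEquiv.piCongrLeft, Equiv.piCongrLeft_apply]

open Classical in
lemma thin {d k : ℕ} (hk : 1 ≤ k) {r r' : ℝ} (a : EuclideanSpace ℝ (Fin d)) (c : ℝ) (hc : 0 < c)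
    (h : hCube d a c ⊆ unitCube d) (hr : r = c * r') (n : ℕ) :
    ∫⁻ x : Fin n → EuclideanSpace ℝ (Fin d),
      (maxColorable d k r ((Finset.image x Finset.univ).filter (· ∈ hCube d a c)) : ENNReal)
      ∂(Measure.pi fun _ => uniformCube d) =
    ∑ A : Finset (Fin n), (uniformCube d (hCube d a c)ᶜ) ^ (n - A.card) *
      ENNReal.ofReal (c ^ d) ^ A.card * EHe d k r' A.card := by
  set Q := hCube d a c with hQdef
  have hQ : MeasurableSet Q := measurableSet_hCube d a c
  have hU : (⋃ A : Finset (Fin n), Set.univ.pi fun i : Fin n => if i ∈ A then Q else Qᶜ) =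
      Set.univ := by
    refine Set.eq_univ_of_forall fun x => Set.mem_iUnion.2 ⟨Finset.univ.filter (x · ∈ Q), ?_⟩
    intro i _
    by_cases hi : x i ∈ Q <;> simp [hi]
  have hiff : ∀ (A : Finset (Fin n)) (x : Fin n → EuclideanSpace ℝ (Fin d)),
      x ∈ (Set.univ.pi fun i : Fin n => if i ∈ A then Q else Qᶜ) → ∀ i, (x i ∈ Q ↔ i ∈ A) := by
    intro A x hx i
    have := hx i trivial
    by_cases hi : i ∈ A <;> simp_all
  have hms : ∀ A : Finset (Fin n),
      MeasurableSet (Set.univ.pi fun i : Fin n => if i ∈ A then Q else Qᶜ) := by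
    intro A
    refine MeasurableSet.univ_pi fun i => ?_
    split_ifs
    exacts [hQ, hQ.compl]
  rw [← setLIntegral_univ, ← hU, lintegral_iUnion hms, tsum_fintype]
  · refine Finset.sum_congr rfl fun A _ => ?_
    rw [← EHe_fintype hk]
    have h1 := lintegral_thin (uniformCube d) (uniformCube d) Q hQ (fun x => a + c • x)
      (by fun_prop) _ (restrict_hCube d a c hc h) n A
      (fun y => (maxColorable d k r (Finset.image y Finset.univ) : ENNReal)) (measurable_mce hk r)
    have h2 : ∀ y : A → EuclideanSpace ℝ (Fin d),
        maxColorable d k r (Finset.image (fun i => a + c • y i) Finset.univ) =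
        maxColorable d k r' (Finset.image y Finset.univ) := by
      intro y
      rw [← mc_image hk (r := r) (Finset.image y Finset.univ) (fun x => a + c • x),
        Finset.image_image]
      · rfl
      · intro u v huv
        exact smul_right_injective _ hc.ne' (add_left_cancel huv)
      · intro u v
        rw [dist_add_left, dist_smul₀, Real.norm_of_nonneg hc.le, hr, mul_le_mul_iff_right₀ hc]
    simp only [h2] at h1
    rw [← h1]
    refine setLIntegral_congr_fun (hms A) fun x hx => ?_
    have hx' := hiff A x hx
    congr 2
    ext u
    simp only [Finset.mem_filter, Finset.mem_image, Finset.mem_univ, true_and]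
    constructor
    · rintro ⟨⟨i, rfl⟩, hi⟩
      exact ⟨⟨i, (hx' i).1 hi⟩, rfl⟩
    · rintro ⟨i, rfl⟩
      exact ⟨⟨i, rfl⟩, (hx' i).2 i.2⟩
  · intro A B hAB
    rw [Function.onFun, Set.disjoint_left]
    intro x hA hB
    apply hAB
    ext i
    rw [← hiff A x hA, ← hiff B x hB]

/-- ENNReal-valued Poisson weights. -/
noncomputable def poE (a : ℝ) (n : ℕ) : ENNReal :=
  ENNReal.ofReal (Real.exp (-a) * a ^ n / (n.factorial : ℝ))

lemma ofReal_poisson (a : ℝ) (ha : 0 ≤ a) (n : ℕ) :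
    ENNReal.ofReal (poissonPMFReal (Real.toNNReal a) n) = poE a n := by
  rw [poissonPMFReal, poE, Real.coe_toNNReal a ha]

lemma tsum_poE (a : ℝ) (ha : 0 ≤ a) : ∑' n, poE a n = 1 := by
  have h := hasSum_one_poissonMeasure (Real.toNNReal a)
  rw [Real.coe_toNNReal a ha] at h
  simp only [poE]
  rw [← ENNReal.ofReal_tsum_of_nonneg (fun n => by positivity) h.summable, h.tsum_eq]
  simp

lemma tsum_poE_mul (a : ℝ) (ha : 0 ≤ a) : ∑' n, poE a n * (n : ENNReal) ≠ ⊤ := by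
  have hs : Summable (fun n : ℕ => Real.exp (-a) * a ^ n / (n.factorial : ℝ) * (n : ℝ)) := by
    rw [← summable_nat_add_iff 1]
    refine ((Real.summable_pow_div_factorial a).mul_left (Real.exp (-a) * a)).congr fun n => ?_
    rw [Nat.factorial_succ]
    have : ((n : ℝ) + 1) ≠ 0 := by positivity
    have : (n.factorial : ℝ) ≠ 0 := by positivity
    push_cast
    field_simp
    try ring
  have := hs.tsum_ofReal_ne_top
  convert this using 4 with n
  rw [poE, ENNReal.ofReal_mul (by positivity), ENNReal.ofReal_natCast]

lemma poisson_thin (a p : ℝ) (ha : 0 ≤ a) (hp : 0 ≤ p) (hp1 : p ≤ 1) (h : ℕ → ENNReal) :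
    ∑' n, poE a n * ∑ A : Finset (Fin n), ENNReal.ofReal (1 - p) ^ (n - A.card) *
      ENNReal.ofReal p ^ A.card * h A.card = ∑' m, poE (a * p) m * h m := by
  have hq : 0 ≤ 1 - p := by linarith
  have e1 : ∀ n, poE a n * ∑ A : Finset (Fin n), ENNReal.ofReal (1 - p) ^ (n - A.card) *
      ENNReal.ofReal p ^ A.card * h A.card =
      ∑ z ∈ Finset.HasAntidiagonal.antidiagonal n, poE (a * p) z.1 * h z.1 * poE (a * (1 - p)) z.2 := by
    intro n
    have := Finset.sum_powerset_apply_card (x := (Finset.univ : Finset (Fin n)))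
      (fun m => ENNReal.ofReal (1 - p) ^ (n - m) * ENNReal.ofReal p ^ m * h m)
    rw [Finset.powerset_univ] at this
    rw [this, Finset.Nat.sum_antidiagonal_eq_sum_range_succ_mk, Finset.mul_sum]
    simp only [Finset.card_univ, Fintype.card_fin]
    refine Finset.sum_congr rfl fun m hm => ?_
    have hmn : m ≤ n := Nat.lt_succ_iff.1 (Finset.mem_range.1 hm)
    have key : poE a n * (n.choose m * (ENNReal.ofReal (1 - p) ^ (n - m) *
        ENNReal.ofReal p ^ m)) = poE (a * p) m * poE (a * (1 - p)) (n - m) := by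
      simp only [poE]
      rw [← ENNReal.ofReal_pow hq, ← ENNReal.ofReal_pow hp, ← ENNReal.ofReal_natCast,
        ← ENNReal.ofReal_mul (by positivity), ← ENNReal.ofReal_mul (by positivity),
        ← ENNReal.ofReal_mul (by positivity), ← ENNReal.ofReal_mul (by positivity)]
      congr 1
      rw [Nat.cast_choose ℝ hmn]
      have e : Real.exp (-a) = Real.exp (-(a * p)) * Real.exp (-(a * (1 - p))) := by
        rw [← Real.exp_add]; congr 1; ring
      have e' : a ^ n = a ^ m * a ^ (n - m) := by rw [← pow_add]; congr 1; omega
      rw [e, e', mul_pow, mul_pow]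
      have : (n.factorial : ℝ) ≠ 0 := by positivity
      field_simp
    rw [nsmul_eq_mul]
    calc _ = (poE a n * (n.choose m * (ENNReal.ofReal (1 - p) ^ (n - m) *
        ENNReal.ofReal p ^ m))) * h m := by ring
      _ = _ := by rw [key]; ring
  simp_rw [e1]
  have e2 : ∑' z : ℕ × ℕ, poE (a * p) z.1 * h z.1 * poE (a * (1 - p)) z.2 =
      ∑' m, poE (a * p) m * h m := by
    rw [ENNReal.tsum_prod (f := fun m l => poE (a * p) m * h m * poE (a * (1 - p)) l)]
    refine tsum_congr fun m => ?_
    rw [ENNReal.tsum_mul_left, tsum_poE _ (by positivity), mul_one]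
  rw [← e2, ← Finset.HasAntidiagonal.sigmaAntidiagonalEquivProd.tsum_eq, ENNReal.tsum_sigma']
  refine tsum_congr fun n => ?_
  rw [tsum_fintype, ← Finset.sum_coe_sort]
  rfl

/-- ENNReal version of `EF`. -/
noncomputable def EFe (d k : ℕ) (lam t : ℝ) : ENNReal :=
  ∑' n : ℕ, poE (lam * t ^ d) n * EHe d k (1 / t) n

lemma EHe_le {d k : ℕ} (hk : 1 ≤ k) (r : ℝ) (n : ℕ) : EHe d k r n ≤ n := by
  rw [EHe]
  calc _ ≤ ∫⁻ x : Fin n → EuclideanSpace ℝ (Fin d), (n : ENNReal)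
        ∂(Measure.pi fun _ => uniformCube d) := by
        refine lintegral_mono fun x => ?_
        refine Nat.cast_le.2 ((mc_le_card hk r _).trans (Finset.card_image_le.trans ?_))
        simp
    _ = n := by simp

lemma EH_eq {d k : ℕ} (hk : 1 ≤ k) (r : ℝ) (n : ℕ) : EH d k r n = (EHe d k r n).toReal := by
  rw [EH, EHe, ← integral_toReal (measurable_mce hk r).aemeasurable]
  · simp
  · exact Filter.Eventually.of_forall fun x => ENNReal.natCast_lt_top _

lemma EFe_ne_top {d k : ℕ} (hk : 1 ≤ k) (lam t : ℝ) (h : 0 ≤ lam * t ^ d) :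
    EFe d k lam t ≠ ⊤ := by
  refine ne_top_of_le_ne_top (tsum_poE_mul _ h) ?_
  exact ENNReal.tsum_le_tsum fun n => by gcongr; exact EHe_le hk _ n

lemma EF_eq {d k : ℕ} (hk : 1 ≤ k) (lam t : ℝ) (h : 0 ≤ lam * t ^ d) :
    EF d k lam t = (EFe d k lam t).toReal := by
  rw [EFe, ENNReal.tsum_toReal_eq]
  · rw [EF]
    refine tsum_congr fun n => ?_
    rw [ENNReal.toReal_mul, ← EH_eq hk, ← ofReal_poisson _ h,
      ENNReal.toReal_ofReal poissonPMFReal_nonneg]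
  · intro n
    exact ENNReal.mul_ne_top ENNReal.ofReal_ne_top
      (ne_top_of_le_ne_top (ENNReal.natCast_ne_top n) (EHe_le hk _ n))

lemma uniformCube_hCube_compl (d : ℕ) (a : EuclideanSpace ℝ (Fin d)) (c : ℝ) (hc : 0 < c)
    (h : hCube d a c ⊆ unitCube d) :
    uniformCube d (hCube d a c)ᶜ = ENNReal.ofReal (1 - c ^ d) := by
  have hφ : Measurable (fun x : EuclideanSpace ℝ (Fin d) => a + c • x) := by fun_prop
  have h1 : uniformCube d (hCube d a c) = ENNReal.ofReal (c ^ d) := by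
    rw [← Measure.restrict_apply_univ, restrict_hCube d a c hc h, Measure.smul_apply,
      Measure.map_apply hφ MeasurableSet.univ]
    simp
  rw [prob_compl_eq_one_sub (measurableSet_hCube d a c), h1, ENNReal.ofReal_sub _ (by positivity)]
  simp

lemma sum_lintegral_le {α ι : Type*} [MeasurableSpace α] (μ : Measure α) (s : Finset ι)
    (f : ι → α → ENNReal) : ∑ j ∈ s, ∫⁻ x, f j x ∂μ ≤ ∫⁻ x, ∑ j ∈ s, f j x ∂μ := by
  classical
  induction s using Finset.induction_on with
  | empty => simp
  | insert a s ha ih =>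
    simp only [Finset.sum_insert ha]
    exact (add_le_add le_rfl ih).trans (le_lintegral_add _ _)

lemma EFe_superadd (d k : ℕ) (hk : 1 ≤ k) (lam : ℝ) (hlam : 0 < lam)
    (s t : ℝ) (hs : 0 < s) (hst : s ≤ t) (m : ℕ) (hm : (m : ℝ) * (s + 1) ≤ t) :
    (m : ENNReal) ^ d * EFe d k lam s ≤ EFe d k lam t := by
  classical
  have ht : 0 < t := hs.trans_le hst
  have hc : 0 < s / t := by positivity
  let a : (Fin d → Fin m) → EuclideanSpace ℝ (Fin d) :=
    fun j => WithLp.toLp 2 fun i => ((j i : ℕ) : ℝ) * (s + 1) / t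
  have ha : ∀ j i, a j i = ((j i : ℕ) : ℝ) * (s + 1) / t := fun j i => rfl
  have hsub : ∀ j, hCube d (a j) (s / t) ⊆ unitCube d := by
    intro j x hx i
    obtain ⟨h1, h2⟩ := hx i
    rw [ha] at h1 h2
    have h0 : 0 ≤ ((j i : ℕ) : ℝ) * (s + 1) / t := by positivity
    have hj : ((j i : ℕ) : ℝ) + 1 ≤ m := by exact_mod_cast (j i).2
    have h3 : ((j i : ℕ) : ℝ) * (s + 1) / t + s / t ≤ 1 := by
      rw [← add_div, div_le_one ht]
      nlinarith
    exact ⟨by linarith, by linarith⟩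
  have hsep1 : ∀ i j : Fin d → Fin m, ∀ l, i l < j l → ∀ u ∈ hCube d (a i) (s / t),
      ∀ v ∈ hCube d (a j) (s / t), 1 / t < dist u v := by
    intro i j l hl u hu v hv
    have h1 := (hu l).2
    have h2 := (hv l).1
    rw [ha] at h1 h2
    have hj : ((i l : ℕ) : ℝ) + 1 ≤ ((j l : ℕ) : ℝ) := by exact_mod_cast hl
    have h3 : ((i l : ℕ) : ℝ) * (s + 1) / t + s / t + 1 / t ≤ ((j l : ℕ) : ℝ) * (s + 1) / t := by
      rw [← add_div, ← add_div]
      gcongr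
      nlinarith
    have h4 : 1 / t < v l - u l := by linarith
    have h5 : ‖(u - v) l‖ ≤ ‖u - v‖ := PiLp.norm_apply_le (u - v) l
    rw [dist_eq_norm]
    refine lt_of_lt_of_le (h4.trans_le ?_) h5
    rw [PiLp.sub_apply, Real.norm_eq_abs, abs_sub_comm]
    exact le_abs_self _
  have hsep : ∀ i j : Fin d → Fin m, i ≠ j → ∀ u ∈ hCube d (a i) (s / t),
      ∀ v ∈ hCube d (a j) (s / t), 1 / t < dist u v := by
    intro i j hij u hu v hv
    obtain ⟨l, hl⟩ := Function.ne_iff.1 hij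
    rcases lt_or_gt_of_ne hl with h | h
    · exact hsep1 i j l h u hu v hv
    · rw [dist_comm]; exact hsep1 j i l h v hv u hu
  have hp1 : (s / t) ^ d ≤ 1 := pow_le_one₀ hc.le ((div_le_one ht).2 hst)
  have hpt : lam * t ^ d * (s / t) ^ d = lam * s ^ d := by
    rw [div_pow]; field_simp
  have hH : ∀ n, ∑ j : Fin d → Fin m, ∑ A : Finset (Fin n),
      ENNReal.ofReal (1 - (s / t) ^ d) ^ (n - A.card) *
      ENNReal.ofReal ((s / t) ^ d) ^ A.card * EHe d k (1 / s) A.card ≤ EHe d k (1 / t) n := by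
    intro n
    calc _ = ∑ j : Fin d → Fin m, ∫⁻ x : Fin n → EuclideanSpace ℝ (Fin d),
        (maxColorable d k (1 / t) ((Finset.image x Finset.univ).filter
          (· ∈ hCube d (a j) (s / t))) : ENNReal) ∂(Measure.pi fun _ => uniformCube d) := by
          refine Finset.sum_congr rfl fun j _ => ?_
          rw [thin hk (r' := 1 / s) (a j) (s / t) hc (hsub j) (by field_simp) n,
            uniformCube_hCube_compl d (a j) (s / t) hc (hsub j)]
      _ ≤ ∫⁻ x : Fin n → EuclideanSpace ℝ (Fin d), ∑ j : Fin d → Fin m,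
        (maxColorable d k (1 / t) ((Finset.image x Finset.univ).filter
          (· ∈ hCube d (a j) (s / t))) : ENNReal) ∂(Measure.pi fun _ => uniformCube d) := by
          exact sum_lintegral_le _ _ _
      _ ≤ EHe d k (1 / t) n := by
          refine lintegral_mono fun x => ?_
          have := mc_superadd hk (1 / t) (Finset.image x Finset.univ)
            (fun j => hCube d (a j) (s / t)) hsep (by positivity)
          rw [← Nat.cast_sum]
          exact Nat.cast_le.2 this
  calc (m : ENNReal) ^ d * EFe d k lam s = ∑ j : Fin d → Fin m, EFe d k lam s := by
        simp
    _ = ∑ j : Fin d → Fin m, ∑' n, poE (lam * t ^ d) n * ∑ A : Finset (Fin n),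
      ENNReal.ofReal (1 - (s / t) ^ d) ^ (n - A.card) *
      ENNReal.ofReal ((s / t) ^ d) ^ A.card * EHe d k (1 / s) A.card := by
        refine Finset.sum_congr rfl fun j _ => ?_
        rw [poisson_thin _ _ (by positivity) (by positivity) hp1, hpt, EFe]
    _ = ∑' n, ∑ j : Fin d → Fin m, poE (lam * t ^ d) n * ∑ A : Finset (Fin n),
      ENNReal.ofReal (1 - (s / t) ^ d) ^ (n - A.card) *
      ENNReal.ofReal ((s / t) ^ d) ^ A.card * EHe d k (1 / s) A.card :=
        (Summable.tsum_finsetSum fun _ _ => ENNReal.summable).symm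
    _ ≤ EFe d k lam t := by
        refine ENNReal.tsum_le_tsum fun n => ?_
        rw [← Finset.mul_sum]
        gcongr
        exact hH n

end Helpers

/-- superadditive expectation bound:
`E[F_{k,λ}(t)] ≥ ⌊t/(s+1)⌋^d E[F_{k,λ}(s)]` for `0 < s ≤ t`. -/
theorem EF_superadditive_bound (d k : ℕ) (hd : 1 ≤ d) (hk : 1 ≤ k) (lam : ℝ) (hlam : 0 < lam)
    (s t : ℝ) (hs : 0 < s) (hst : s ≤ t) :
    ((⌊t / (s + 1)⌋ : ℤ) : ℝ) ^ d * EF d k lam s ≤ EF d k lam t := by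
  have ht : 0 < t := hs.trans_le hst
  have hq : 0 ≤ t / (s + 1) := by positivity
  obtain ⟨m, hm⟩ := Int.eq_ofNat_of_zero_le (Int.floor_nonneg.2 hq)
  have hm' : (m : ℝ) * (s + 1) ≤ t := by
    have := Int.floor_le (t / (s + 1))
    rw [hm, Int.cast_natCast] at this
    rwa [le_div_iff₀ (by positivity)] at this
  rw [hm, Int.cast_natCast, EF_eq hk lam s (by positivity), EF_eq hk lam t (by positivity)]
  have h := ENNReal.toReal_mono (EFe_ne_top hk lam t (by positivity))
    (EFe_superadd d k hk lam hlam s t hs hst m hm')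
  simpa using h
end

section
/- Exact value in dimension one: for d = 1, every k ≥ 1, and every λ > 0, one has a_{k,λ} = (∑_{m=0}^{k−1} λ^m/m!) / (∑_{l=0}^{k} λ^l/l!), i.e., a_{k,λ} = 1 − Erl(λ,k), where Erl(λ,k) = (λ^k/k!) / (∑_{l=0}^{k} λ^l/l!) is the Erlang loss probability. -/
open MeasureTheory ProbabilityTheory Filter

open Classical in
/-- Greedily accepted sites (shifted by `d`), started from the initial window `w ⊆ range d`. -/
noncomputable def grA (k d : ℕ) (B w : Finset ℕ) : ℕ → Finset ℕ
  | 0 => w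
  | n + 1 => if n ∈ B ∧ ((grA k d B w n).filter (fun j => n ≤ j)).card < k
      then insert (n + d) (grA k d B w n) else grA k d B w n

lemma grA_subset (k d : ℕ) (B w : Finset ℕ) (hw : w ⊆ Finset.range d) (n : ℕ) :
    grA k d B w n ⊆ Finset.range (n + d) := by
  induction n with
  | zero => simpa [grA] using hw
  | succ n ih =>
    have h2 : grA k d B w n ⊆ Finset.range (n + 1 + d) :=
      ih.trans (Finset.range_subset_range.2 (by omega))
    simp only [grA]
    split_ifs
    · apply Finset.insert_subset _ h2
      simp
    · exact h2

lemma grA_mono_succ (k d : ℕ) (B w : Finset ℕ) (n : ℕ) :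
    grA k d B w n ⊆ grA k d B w (n + 1) := by
  conv_rhs => rw [grA]
  split_ifs
  · exact Finset.subset_insert _ _
  · exact subset_rfl

lemma grA_mono (k d : ℕ) (B w : Finset ℕ) : Monotone (grA k d B w) :=
  monotone_nat_of_le_succ (grA_mono_succ k d B w)

lemma grA_congr (k d : ℕ) (B B' w : Finset ℕ) (n : ℕ) (h : ∀ i < n, (i ∈ B ↔ i ∈ B')) :
    grA k d B w n = grA k d B' w n := by
  induction n with
  | zero => rfl
  | succ n ih =>
    have := ih (fun i hi => h i (by omega))
    simp only [grA, this, h n (by omega)]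

lemma grA_mem (k d : ℕ) (B w : Finset ℕ) (hw : w ⊆ Finset.range d) (n j : ℕ)
    (hj : j ∈ grA k d B w n) (hd : d ≤ j) : j - d ∈ B ∧ j - d < n := by
  induction n with
  | zero =>
    have := Finset.mem_range.1 (hw hj)
    omega
  | succ n ih =>
    simp only [grA] at hj
    split_ifs at hj with h
    · rcases Finset.mem_insert.1 hj with rfl | hj
      · simp [h.1]
      · have := ih hj
        exact ⟨this.1, by omega⟩
    · have := ih hj
      exact ⟨this.1, by omega⟩

/-- the accepted sites can be colored -/
lemma grA_color (k d : ℕ) (hk : 1 ≤ k) (B w : Finset ℕ) (hw : w ⊆ Finset.range d) (n : ℕ) :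
    ∃ c : ℕ → Fin k, ∀ u ∈ grA k d B w n, ∀ v ∈ grA k d B w n, d ≤ u → d ≤ v → u < v →
      v ≤ u + d → c u ≠ c v := by
  induction n with
  | zero =>
    refine ⟨fun _ => ⟨0, by omega⟩, fun u hu v hv hdu => ?_⟩
    have := Finset.mem_range.1 (hw hu)
    omega
  | succ n ih =>
    obtain ⟨c, hc⟩ := ih
    by_cases h : n ∈ B ∧ ((grA k d B w n).filter (fun j => n ≤ j)).card < k
    · have hcard : (((grA k d B w n).filter (fun j => n ≤ j)).image c).card
          < (Finset.univ : Finset (Fin k)).card := by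
        rw [Finset.card_univ, Fintype.card_fin]
        exact lt_of_le_of_lt Finset.card_image_le h.2
      obtain ⟨a, -, ha⟩ := Finset.exists_mem_notMem_of_card_lt_card hcard
      refine ⟨fun j => if j = n + d then a else c j, ?_⟩
      intro u hu v hv hdu hdv huv hvd
      have e : grA k d B w (n+1) = insert (n + d) (grA k d B w n) := by
        rw [grA, if_pos h]
      rw [e] at hu hv
      have hsub := grA_subset k d B w hw n
      have hun : u ∈ grA k d B w n := by
        rcases Finset.mem_insert.1 hu with rfl | hu
        · rcases Finset.mem_insert.1 hv with rfl | hv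
          · omega
          · have := Finset.mem_range.1 (hsub hv)
            omega
        · exact hu
      have hu' := Finset.mem_range.1 (hsub hun)
      beta_reduce
      rw [if_neg (by omega)]
      rcases Finset.mem_insert.1 hv with rfl | hv
      · rw [if_pos rfl]
        rintro rfl
        exact ha (Finset.mem_image_of_mem c (Finset.mem_filter.2 ⟨hun, by omega⟩))
      · have := Finset.mem_range.1 (hsub hv)
        rw [if_neg (by omega)]
        exact hc u hun v hv hdu hdv huv hvd
    · refine ⟨c, ?_⟩
      have e : grA k d B w (n+1) = grA k d B w n := by
        rw [grA, if_neg h]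
      rw [e]
      exact hc

/-- greedy is optimal up to `k` -/
lemma grA_opt (k d : ℕ) (B w T : Finset ℕ) (hw : w ⊆ Finset.range d)
    (hTB : T ⊆ B) (hT : ∀ s, (T.filter (fun j => s ≤ j ∧ j ≤ s + d)).card ≤ k) (n : ℕ) :
    (T.filter (fun j => j < n)).card + w.card ≤ (grA k d B w n).card + k := by
  induction n using Nat.strong_induction_on with
  | _ n ih =>
  rcases n with _ | n
  · simp [grA]
  have hsub := grA_subset k d B w hw n
  by_cases hnT : n ∈ T
  · have hcard : (T.filter (fun j => j < n+1)).card ≤ (T.filter (fun j => j < n)).card + 1 := by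
      have : T.filter (fun j => j < n+1) ⊆ insert n (T.filter (fun j => j < n)) := by
        intro j hj
        simp only [Finset.mem_filter, Finset.mem_insert] at hj ⊢
        rcases Nat.lt_succ_iff_lt_or_eq.1 hj.2 with h | h
        · exact Or.inr ⟨hj.1, h⟩
        · exact Or.inl h
      exact (Finset.card_le_card this).trans (Finset.card_insert_le _ _)
    by_cases h : ((grA k d B w n).filter (fun j => n ≤ j)).card < k
    · have e : grA k d B w (n+1) = insert (n + d) (grA k d B w n) := by
        rw [grA, if_pos ⟨hTB hnT, h⟩]
      have hn : n + d ∉ grA k d B w n := fun hh => by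
        have := Finset.mem_range.1 (hsub hh)
        omega
      rw [e, Finset.card_insert_of_notMem hn]
      have := ih n (by omega)
      omega
    · have e : grA k d B w (n+1) = grA k d B w n := by
        rw [grA, if_neg (fun hh => h hh.2)]
      rw [e]
      push Not at h
      by_cases hnd : d ≤ n
      · have h1 := ih (n - d) (by omega)
        have h2 : (T.filter (fun j => j < n+1)).card ≤
            (T.filter (fun j => j < n-d)).card + k := by
          refine le_trans (le_trans (Finset.card_le_card ?_) (Finset.card_union_le _ _))
            (Nat.add_le_add_left (hT (n-d)) _)
          intro j hj
          simp only [Finset.mem_filter, Finset.mem_union] at hj ⊢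
          by_cases hj' : j < n - d
          · exact Or.inl ⟨hj.1, hj'⟩
          · exact Or.inr ⟨hj.1, by omega, by omega⟩
        have h3 : (grA k d B w (n-d)).card + ((grA k d B w n).filter (fun j => n ≤ j)).card
            ≤ (grA k d B w n).card := by
          rw [← Finset.card_union_of_disjoint]
          · apply Finset.card_le_card
            exact Finset.union_subset (grA_mono k d B w (Nat.sub_le _ _))
              (Finset.filter_subset _ _)
          · rw [Finset.disjoint_left]
            intro j hj hj'
            have h4 := Finset.mem_range.1 (grA_subset k d B w hw _ hj)
            have h5 := (Finset.mem_filter.1 hj').2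
            omega
        omega
      · have h2 : (T.filter (fun j => j < n+1)).card ≤ k := by
          refine le_trans (Finset.card_le_card ?_) (hT 0)
          intro j hj
          simp only [Finset.mem_filter] at hj ⊢
          exact ⟨hj.1, by omega, by omega⟩
        have h3 : w.card ≤ (grA k d B w n).card :=
          Finset.card_le_card (grA_mono k d B w (Nat.zero_le n))
        omega
  · have h1 : T.filter (fun j => j < n+1) = T.filter (fun j => j < n) := by
      apply Finset.filter_congr
      intro j hj
      have : j ≠ n := fun h => hnT (h ▸ hj)
      omega
    rw [h1]
    have := ih n (by omega)
    have h3 := Finset.card_le_card (grA_mono_succ k d B w n)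
    omega

/-- Expectation over i.i.d. Bernoulli(p) occupied sites in `range M`. -/
noncomputable def bE (p : ℝ) (M : ℕ) (f : Finset ℕ → ℝ) : ℝ :=
  ∑ B ∈ (Finset.range M).powerset, p ^ B.card * (1 - p) ^ (M - B.card) * f B

lemma bE_succ (p : ℝ) (M : ℕ) (f : Finset ℕ → ℝ) :
    bE p (M + 1) f = bE p M (fun B => (1 - p) * f B + p * f (insert M B)) := by
  unfold bE
  rw [Finset.range_add_one, Finset.sum_powerset_insert (by simp), ← Finset.sum_add_distrib]
  apply Finset.sum_congr rfl
  intro B hB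
  have hB' := Finset.mem_powerset.1 hB
  have hM : M ∉ B := fun h => by simpa using hB' h
  have hc : B.card ≤ M := by simpa using Finset.card_le_card hB'
  rw [Finset.card_insert_of_notMem hM, show M + 1 - B.card = (M - B.card) + 1 by omega,
    show M + 1 - (B.card + 1) = M - B.card by omega]
  ring

lemma bE_congr (p : ℝ) (M : ℕ) (f g : Finset ℕ → ℝ)
    (h : ∀ B ⊆ Finset.range M, f B = g B) : bE p M f = bE p M g := by
  unfold bE
  apply Finset.sum_congr rfl
  intro B hB
  rw [h B (Finset.mem_powerset.1 hB)]

lemma bE_add (p : ℝ) (M : ℕ) (f g : Finset ℕ → ℝ) :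
    bE p M (fun B => f B + g B) = bE p M f + bE p M g := by
  simp only [bE, mul_add, Finset.sum_add_distrib]

lemma bE_sub (p : ℝ) (M : ℕ) (f g : Finset ℕ → ℝ) :
    bE p M (fun B => f B - g B) = bE p M f - bE p M g := by
  simp only [bE, mul_sub, Finset.sum_sub_distrib]

lemma bE_mul (p c : ℝ) (M : ℕ) (f : Finset ℕ → ℝ) :
    bE p M (fun B => c * f B) = c * bE p M f := by
  simp only [bE, Finset.mul_sum]
  exact Finset.sum_congr rfl fun _ _ => by ring

lemma bE_const (p c : ℝ) (M : ℕ) : bE p M (fun _ => c) = c := by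
  induction M with
  | zero => simp [bE]
  | succ M ih =>
    rw [bE_succ]
    convert ih using 2
    ring_nf

lemma bE_card (p : ℝ) (M : ℕ) : bE p M (fun B => (B.card : ℝ)) = M * p := by
  induction M with
  | zero => simp [bE]
  | succ M ih =>
    rw [bE_succ, bE_congr p M _ (fun B => (B.card : ℝ) + p), bE_add, ih, bE_const]
    · push_cast; ring
    · intro B hB
      have hM : M ∉ B := fun h => by simpa using hB h
      rw [Finset.card_insert_of_notMem hM]
      push_cast; ring

/-- stationary weights -/
noncomputable def phi (k : ℕ) (p : ℝ) (m : ℕ) : ℝ :=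
  if m < k then (p / (1 - p)) ^ m else if m = k then p * (p / (1 - p)) ^ (k - 1) else 0

lemma phi_nonneg (k : ℕ) (p : ℝ) (hp : 0 < p) (hp1 : p < 1) (m : ℕ) : 0 ≤ phi k p m := by
  have : 0 < 1 - p := by linarith
  unfold phi
  split_ifs <;> positivity

open Classical in
noncomputable def stp (k d n : ℕ) (v : Finset ℕ) : Finset ℕ :=
  (if v.card < k then insert (n + d) v else v).filter (fun j => n + 1 ≤ j)

lemma phi_stat (k d n : ℕ) (hk : 1 ≤ k) (hd : 1 ≤ d) (p : ℝ) (hp : 0 < p) (hp1 : p < 1)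
    (f : Finset ℕ → ℝ) :
    ∑ v ∈ (Finset.Ico n (n + d)).powerset, phi k p v.card *
        ((1 - p) * f (v.filter (fun j => n + 1 ≤ j)) + p * f (stp k d n v)) =
      ∑ v ∈ (Finset.Ico (n + 1) (n + 1 + d)).powerset, phi k p v.card * f v := by
  have e1 : Finset.Ico n (n + d) = insert n (Finset.Ico (n + 1) (n + d)) := by
    ext j; simp only [Finset.mem_Ico, Finset.mem_insert]; omega
  have e2 : Finset.Ico (n + 1) (n + 1 + d) = insert (n + d) (Finset.Ico (n + 1) (n + d)) := by
    ext j; simp only [Finset.mem_Ico, Finset.mem_insert]; omega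
  rw [e1, e2, Finset.sum_powerset_insert (by simp), Finset.sum_powerset_insert (by simp),
    ← Finset.sum_add_distrib, ← Finset.sum_add_distrib]
  apply Finset.sum_congr rfl
  intro u hu
  have hu' := Finset.mem_powerset.1 hu
  have hn : n ∉ u := fun h => by simpa using hu' h
  have hnd : n + d ∉ u := fun h => by simpa using hu' h
  have f1 : u.filter (fun j => n + 1 ≤ j) = u := by
    apply Finset.filter_true_of_mem
    intro j hj
    exact (Finset.mem_Ico.1 (hu' hj)).1
  have f2 : (insert n u).filter (fun j => n + 1 ≤ j) = u := by
    rw [Finset.filter_insert, if_neg (by omega), f1]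
  have f3 : (insert (n + d) u).filter (fun j => n + 1 ≤ j) = insert (n + d) u := by
    rw [Finset.filter_insert, if_pos (by omega), f1]
  have f4 : (insert (n + d) (insert n u)).filter (fun j => n + 1 ≤ j) = insert (n + d) u := by
    rw [Finset.filter_insert, if_pos (by omega), f2]
  have hq : 0 < 1 - p := by linarith
  have s1 : stp k d n u = if u.card < k then insert (n + d) u else u := by
    unfold stp
    split_ifs
    · exact f3
    · exact f1
  have s2 : stp k d n (insert n u) = if u.card + 1 < k then insert (n + d) u else u := by
    unfold stp
    rw [Finset.card_insert_of_notMem hn]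
    split_ifs
    · exact f4
    · exact f2
  rw [s1, s2, f1, f2, Finset.card_insert_of_notMem hn, Finset.card_insert_of_notMem hnd]
  rcases lt_trichotomy (u.card + 1) k with h | h | h
  · have h' : u.card < k := by omega
    have hqq : (1 - p) * (p / (1 - p)) = p := by field_simp
    simp only [phi, h, h', if_true]
    rw [pow_succ]
    linear_combination ((p / (1 - p)) ^ u.card * (f u - f (insert (n + d) u))) * hqq
  · have h' : u.card < k := by omega
    have h'' : k - 1 = u.card := by omega
    simp only [phi, h, h', lt_irrefl, if_true, if_false, h'']
    field_simp
    ring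
  · have h1 : ¬ u.card < k := by omega
    have h2 : ¬ u.card + 1 < k := by omega
    have h3 : ¬ u.card + 1 = k := by omega
    simp only [phi, h1, h2, h3, if_false]
    ring

lemma grA_window_step (k d n : ℕ) (B w : Finset ℕ) :
    (grA k d B w (n + 1)).filter (fun j => n + 1 ≤ j) =
      if n ∈ B then stp k d n ((grA k d B w n).filter (fun j => n ≤ j))
      else ((grA k d B w n).filter (fun j => n ≤ j)).filter (fun j => n + 1 ≤ j) := by
  have ff : ((grA k d B w n).filter (fun j => n ≤ j)).filter (fun j => n + 1 ≤ j)
      = (grA k d B w n).filter (fun j => n + 1 ≤ j) := by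
    rw [Finset.filter_filter]
    apply Finset.filter_congr
    intro j _
    omega
  rw [grA]
  by_cases h1 : n ∈ B
  · by_cases h2 : ((grA k d B w n).filter (fun j => n ≤ j)).card < k
    · rw [if_pos ⟨h1, h2⟩, if_pos h1, stp, if_pos h2, Finset.filter_insert, Finset.filter_insert, ff]
    · rw [if_neg (fun h => h2 h.2), if_pos h1, stp, if_neg h2, ff]
  · rw [if_neg (fun h => h1 h.1), if_neg h1, ff]

lemma grA_insert (k d n : ℕ) (B w : Finset ℕ) :
    grA k d (insert n B) w n = grA k d B w n := by
  apply grA_congr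
  intro i hi
  rw [Finset.mem_insert]
  constructor
  · rintro (h | h)
    · omega
    · exact h
  · exact Or.inr

lemma window_law (k d : ℕ) (hk : 1 ≤ k) (hd : 1 ≤ d) (p : ℝ) (hp : 0 < p) (hp1 : p < 1)
    (n : ℕ) : ∀ f : Finset ℕ → ℝ,
    ∑ w ∈ (Finset.range d).powerset, phi k p w.card *
        bE p n (fun B => f ((grA k d B w n).filter (fun j => n ≤ j))) =
      ∑ v ∈ (Finset.Ico n (n + d)).powerset, phi k p v.card * f v := by
  induction n with
  | zero =>
    intro f
    simp [bE, grA]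
  | succ n ih =>
    intro f
    rw [← phi_stat k d n hk hd p hp hp1 f,
      ← ih (fun v => (1 - p) * f (v.filter (fun j => n + 1 ≤ j)) + p * f (stp k d n v))]
    apply Finset.sum_congr rfl
    intro w _
    rw [bE_succ]
    congr 1
    apply bE_congr
    intro B hB
    have hn : n ∉ B := fun h => by simpa using hB h
    rw [grA_window_step k d n B w, grA_window_step k d n (insert n B) w, if_neg hn,
      if_pos (Finset.mem_insert_self _ _), grA_insert]

lemma card_law (k d : ℕ) (hk : 1 ≤ k) (hd : 1 ≤ d) (p : ℝ) (hp : 0 < p) (hp1 : p < 1)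
    (n : ℕ) :
    ∑ w ∈ (Finset.range d).powerset, phi k p w.card *
        bE p n (fun B => ((grA k d B w n).card : ℝ) - w.card) =
      n * p * ∑ m ∈ Finset.range k, (d.choose m : ℝ) * (p / (1 - p)) ^ m := by
  induction n with
  | zero => simp [bE, grA]
  | succ n ih =>
    have key : ∀ w ∈ (Finset.range d).powerset, phi k p w.card *
        bE p (n+1) (fun B => ((grA k d B w (n+1)).card : ℝ) - w.card) =
        phi k p w.card * bE p n (fun B => ((grA k d B w n).card : ℝ) - w.card) +
        p * (phi k p w.card * bE p n (fun B =>
          (fun v : Finset ℕ => if v.card < k then (1:ℝ) else 0)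
            ((grA k d B w n).filter (fun j => n ≤ j)))) := by
      intro w hw
      have hw' := Finset.mem_powerset.1 hw
      rw [mul_left_comm p, ← mul_add, ← bE_mul p p, ← bE_add, bE_succ]
      congr 1
      apply bE_congr
      intro B hB
      have hn : n ∉ B := fun h => by simpa using hB h
      have hsub := grA_subset k d B w hw' n
      have hnd : n + d ∉ grA k d B w n := fun hh => by
        have := Finset.mem_range.1 (hsub hh)
        omega
      have e1 : grA k d B w (n+1) = grA k d B w n := by
        rw [grA, if_neg (fun h => hn h.1)]
      have e2 : grA k d (insert n B) w (n+1) =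
          if ((grA k d B w n).filter (fun j => n ≤ j)).card < k
          then insert (n + d) (grA k d B w n) else grA k d B w n := by
        rw [grA, grA_insert]
        simp
      rw [e1, e2]
      beta_reduce
      by_cases h : ((grA k d B w n).filter (fun j => n ≤ j)).card < k
      · rw [if_pos h, if_pos h, Finset.card_insert_of_notMem hnd]
        push_cast; ring
      · rw [if_neg h, if_neg h]
        ring
    rw [Finset.sum_congr rfl key, Finset.sum_add_distrib, ih, ← Finset.mul_sum,
      window_law k d hk hd p hp hp1 n (fun v : Finset ℕ => if v.card < k then (1:ℝ) else 0)]
    have : ∑ v ∈ (Finset.Ico n (n + d)).powerset, phi k p v.card *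
        (fun v : Finset ℕ => if v.card < k then (1:ℝ) else 0) v =
        ∑ m ∈ Finset.range k, (d.choose m : ℝ) * (p / (1 - p)) ^ m := by
      have h0 := Finset.sum_powerset_apply_card
        (fun m => phi k p m * if m < k then (1:ℝ) else 0) (x := Finset.Ico n (n + d))
      rw [Nat.card_Ico, Nat.add_sub_cancel_left] at h0
      simp only at h0 ⊢
      rw [h0]
      have h1 : ∀ m, d.choose m • (phi k p m * if m < k then (1:ℝ) else 0) =
          if m < k then (d.choose m : ℝ) * (p / (1 - p)) ^ m else 0 := by
        intro m
        by_cases h : m < k <;> simp [phi, h]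
      simp only [h1]
      rw [← Finset.sum_filter]
      apply Finset.sum_subset_zero_on_sdiff
      · intro m hm
        simp at hm ⊢
        exact hm.2
      · intro m hm
        simp at hm
        rw [Nat.choose_eq_zero_of_lt (by omega)]
        simp
      · intros; rfl
    rw [this]
    push_cast; ring

noncomputable def Sd (k d : ℕ) (p : ℝ) : ℝ :=
  ∑ m ∈ Finset.range k, (d.choose m : ℝ) * (p / (1 - p)) ^ m

noncomputable def Zd (k d : ℕ) (p : ℝ) : ℝ :=
  Sd k d p + (d.choose k : ℝ) * (p * (p / (1 - p)) ^ (k - 1))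

lemma phi_sum (k d : ℕ) (p : ℝ) :
    ∑ w ∈ (Finset.range d).powerset, phi k p w.card = Zd k d p := by
  rw [Finset.sum_powerset_apply_card (fun m => phi k p m) (x := Finset.range d),
    Finset.card_range]
  have h2 : ∑ m ∈ Finset.range (k + 1), d.choose m • phi k p m = Zd k d p := by
    rw [Finset.sum_range_succ, Zd, Sd]
    congr 1
    · apply Finset.sum_congr rfl
      intro m hm
      simp [phi, Finset.mem_range.1 hm]
    · simp [phi]
  rw [← h2]
  rcases le_total d k with h | h
  · apply Finset.sum_subset (Finset.range_subset_range.2 (by omega))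
    intro m _ hm
    simp at hm
    rw [Nat.choose_eq_zero_of_lt (by omega)]
    simp
  · symm
    apply Finset.sum_subset (Finset.range_subset_range.2 (by omega))
    intro m _ hm
    simp at hm
    have h3 : ¬ m < k := by omega
    have h4 : ¬ m = k := by omega
    simp [phi, h3, h4]

set_option linter.deprecated false

lemma hs_conv {f g : ℕ → ℝ} {a b : ℝ} (h : HasSum g b) (hf : ∀ n, f n = g n) (ha : a = b) :
    HasSum f a := by
  have : f = g := funext hf
  rw [this, ha]
  exact h

/-- set of occupied cells -/
def occ {n M : ℕ} (y : Fin n → Fin M) : Finset ℕ := Finset.univ.image (fun i => (y i : ℕ))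

lemma occ_subset {n M : ℕ} (y : Fin n → Fin M) : occ y ⊆ Finset.range M := by
  intro j hj
  simp only [occ, Finset.mem_image, Finset.mem_univ, true_and] at hj
  obtain ⟨i, rfl⟩ := hj
  simp

lemma occ_count_subset (n M : ℕ) (A : Finset ℕ) (hA : A ⊆ Finset.range M) :
    (Finset.univ.filter (fun y : Fin n → Fin M => occ y ⊆ A)).card = A.card ^ n := by
  have e : Finset.univ.filter (fun y : Fin n → Fin M => occ y ⊆ A) =
      Fintype.piFinset (fun _ : Fin n => Finset.univ.filter (fun j : Fin M => (j : ℕ) ∈ A)) := by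
    ext y
    simp [occ, Finset.image_subset_iff]
  rw [e, Fintype.card_piFinset_const]
  congr 1
  refine Finset.card_bij (fun j _ => (j : ℕ)) ?_ ?_ ?_
  · intro j hj
    simpa using hj
  · intro i _ j _ h
    exact Fin.ext h
  · intro j hj
    exact ⟨⟨j, Finset.mem_range.1 (hA hj)⟩, by simpa using hj, rfl⟩

lemma occ_count_sum (n M : ℕ) (A : Finset ℕ) :
    (Finset.univ.filter (fun y : Fin n → Fin M => occ y ⊆ A)).card =
      ∑ B ∈ A.powerset, (Finset.univ.filter (fun y : Fin n → Fin M => occ y = B)).card := by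
  rw [Finset.card_eq_sum_card_fiberwise (f := occ) (t := A.powerset)]
  · apply Finset.sum_congr rfl
    intro B hB
    congr 1
    ext y
    simp only [Finset.mem_filter, Finset.mem_univ, true_and, Finset.mem_powerset] at hB ⊢
    constructor
    · exact fun h => h.2
    · rintro rfl
      exact ⟨hB, rfl⟩
  · intro y hy
    simpa using hy

lemma occ_hasSum (M : ℕ) (hM : 0 < M) (mu : NNReal) (A : Finset ℕ) :
    A ⊆ Finset.range M →
    HasSum (fun n => poissonPMFReal mu n *
      (((Finset.univ.filter (fun y : Fin n → Fin M => occ y = A)).card : ℝ) / (M : ℝ) ^ n))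
      ((1 - Real.exp (-(mu / M))) ^ A.card *
        (1 - (1 - Real.exp (-(mu / M)))) ^ (M - A.card)) := by
  induction A using Finset.strongInduction with
  | H A ih =>
  intro hA
  have hM' : (M : ℝ) ≠ 0 := by positivity
  set p := 1 - Real.exp (-((mu : ℝ) / M)) with hp
  have hAM : A.card ≤ M := by simpa using Finset.card_le_card hA
  have h1 : HasSum (fun n => poissonPMFReal mu n * ((A.card : ℝ) ^ n / (M : ℝ) ^ n))
      ((1 - p) ^ (M - A.card)) := by
    have h := (NormedSpace.expSeries_div_hasSum_exp (𝔸 := ℝ) ((mu : ℝ) * A.card / M)).mul_left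
      (Real.exp (-mu))
    rw [← Real.exp_eq_exp_ℝ, ← Real.exp_add] at h
    refine hs_conv h ?_ ?_
    · intro n
      unfold poissonPMFReal
      rw [div_pow, mul_pow]
      field_simp
    · rw [hp, sub_sub_cancel, ← Real.exp_nat_mul, Nat.cast_sub hAM]
      congr 1
      field_simp
      ring
  have h2 : HasSum (fun n => ∑ B ∈ A.ssubsets, poissonPMFReal mu n *
      (((Finset.univ.filter (fun y : Fin n → Fin M => occ y = B)).card : ℝ) / (M : ℝ) ^ n))
      (∑ B ∈ A.ssubsets, p ^ B.card * (1 - p) ^ (M - B.card)) := by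
    apply hasSum_sum
    intro B hB
    have hB' := Finset.mem_ssubsets.1 hB
    exact ih B hB' (hB'.subset.trans hA)
  have hpow : A.powerset = insert A A.ssubsets := by
    rw [Finset.ssubsets, Finset.insert_erase (Finset.mem_powerset_self A)]
  have hnm : A ∉ A.ssubsets := by simp [Finset.mem_ssubsets]
  refine hs_conv (h1.sub h2) ?_ ?_
  · intro n
    have := occ_count_sum n M A
    rw [occ_count_subset n M A hA, hpow, Finset.sum_insert hnm] at this
    have h3 : (A.card : ℝ) ^ n =
      ((Finset.univ.filter (fun y : Fin n → Fin M => occ y = A)).card : ℝ) +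
      ∑ B ∈ A.ssubsets,
        ((Finset.univ.filter (fun y : Fin n → Fin M => occ y = B)).card : ℝ) := by
      exact_mod_cast this
    rw [h3, ← Finset.mul_sum, ← Finset.sum_div]
    ring
  · have h4 : ∑ B ∈ A.powerset, p ^ B.card * (1 - p) ^ (M - B.card) = (1 - p) ^ (M - A.card) := by
      have h5 := Finset.sum_pow_mul_eq_add_pow p (1 - p) A
      rw [add_sub_cancel, one_pow] at h5
      calc _ = ∑ B ∈ A.powerset, (p ^ B.card * (1 - p) ^ (A.card - B.card)) *
              (1 - p) ^ (M - A.card) := by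
            apply Finset.sum_congr rfl
            intro B hB
            have := Finset.card_le_card (Finset.mem_powerset.1 hB)
            rw [mul_assoc, ← pow_add]
            congr 2
            omega
        _ = _ := by rw [← Finset.sum_mul, h5, one_mul]
    rw [hpow, Finset.sum_insert hnm] at h4
    linarith

lemma avg_hasSum (M : ℕ) (hM : 0 < M) (mu : NNReal) (h : Finset ℕ → ℝ) :
    HasSum (fun n => poissonPMFReal mu n *
      ((∑ y : Fin n → Fin M, h (occ y)) / (M : ℝ) ^ n))
      (bE (1 - Real.exp (-(mu / M))) M h) := by
  have h1 : ∀ n, poissonPMFReal mu n * ((∑ y : Fin n → Fin M, h (occ y)) / (M : ℝ) ^ n) =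
      ∑ A ∈ (Finset.range M).powerset, (poissonPMFReal mu n *
      (((Finset.univ.filter (fun y : Fin n → Fin M => occ y = A)).card : ℝ) / (M : ℝ) ^ n)) *
        h A := by
    intro n
    have h2 : ∑ y : Fin n → Fin M, h (occ y) = ∑ A ∈ (Finset.range M).powerset,
        ((Finset.univ.filter (fun y : Fin n → Fin M => occ y = A)).card : ℝ) * h A := by
      rw [← Finset.sum_fiberwise_of_maps_to (s := Finset.univ) (t := (Finset.range M).powerset)
        (g := occ) (fun y _ => Finset.mem_powerset.2 (occ_subset y))]
      apply Finset.sum_congr rfl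
      intro A _
      rw [Finset.sum_congr rfl (g := fun _ => h A), Finset.sum_const, nsmul_eq_mul]
      intro y hy
      rw [(Finset.mem_filter.1 hy).2]
    rw [h2, Finset.sum_div, Finset.mul_sum]
    exact Finset.sum_congr rfl fun _ _ => by ring
  simp only [h1, bE]
  apply hasSum_sum
  intro A hA
  exact (occ_hasSum M hM mu A (Finset.mem_powerset.1 hA)).mul_right _

lemma pois_mean (mu : NNReal) : HasSum (fun n : ℕ => poissonPMFReal mu n * n) (mu : ℝ) := by
  rw [← hasSum_nat_add_iff' 1]
  have h := (hasSum_one_poissonMeasure mu).mul_left (mu : ℝ)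
  refine hs_conv h ?_ ?_
  · intro n
    unfold poissonPMFReal
    rw [Nat.factorial_succ]
    push_cast
    rw [pow_succ]
    field_simp
  · simp

open Topology Asymptotics in
lemma choose_lim (d : ℕ → ℕ) (q : ℕ → ℝ) (r : ℝ) (m : ℕ) (hd : Tendsto d atTop atTop)
    (hr : Tendsto (fun n => d n * q n) atTop (𝓝 r)) :
    Tendsto (fun n => (d n).choose m * (q n) ^ m) atTop (𝓝 (r ^ m / m.factorial)) := by
  have h0 := (isEquivalent_choose m).comp_tendsto hd
  have : (fun n => ((d n).choose m : ℝ) * (q n) ^ m) ~[atTop]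
      (fun n ↦ ((d n * q n) ^ m) / m.factorial) :=
    calc
    _ ~[atTop] (fun n => ((d n : ℝ) ^ m / m.factorial) * (q n) ^ m) :=
      h0.mul IsEquivalent.refl
    _ ~[atTop] (fun n ↦ ((d n * q n) ^ m) / m.factorial) :=
      EventuallyEq.isEquivalent (.of_eq (by ext; field))
  refine (IsEquivalent.tendsto_nhds_iff this).mpr ?_
  simpa [div_eq_mul_inv] using (hr.pow m).mul_const ((m.factorial : ℝ)⁻¹)

open Topology in
lemma Mp_lim (mu : ℝ) :
    Tendsto (fun M : ℕ => (M : ℝ) * (1 - Real.exp (-(mu / M)))) atTop (𝓝 mu) := by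
  have h1 : HasDerivAt (fun x : ℝ => 1 - Real.exp (-(mu * x))) mu 0 := by
    have : HasDerivAt (fun x : ℝ => -(mu * x)) (-mu) 0 := by
      have h := ((hasDerivAt_id (0:ℝ)).const_mul mu).neg
      rw [mul_one] at h
      exact h
    simpa using (this.exp.const_sub 1)
  have h2 := h1.tendsto_slope_zero_right
  have h3 : Tendsto (fun M : ℕ => ((M : ℝ))⁻¹) atTop (𝓝[>] 0) :=
    tendsto_inv_atTop_nhdsGT_zero.comp tendsto_natCast_atTop_atTop
  refine (h2.comp h3).congr ?_
  intro M
  simp [div_eq_mul_inv]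

open Topology in
lemma p_lim (mu : ℝ) :
    Tendsto (fun M : ℕ => (1 - Real.exp (-(mu / M)))) atTop (𝓝 0) := by
  have h3 : Tendsto (fun M : ℕ => -(mu / (M : ℝ))) atTop (𝓝 0) := by
    simpa using (tendsto_const_div_atTop_nhds_zero_nat mu).neg
  have := (Real.continuous_exp.tendsto 0).comp h3
  simpa using this.const_sub 1

open Topology in
lemma ratio_lim (k : ℕ) (hk : 1 ≤ k) (lam t : ℝ) (hl : 0 < lam) (ht : 0 < t) (d : ℕ → ℕ)
    (hd : Tendsto (fun M => (d M : ℝ) / M) atTop (𝓝 (1 / t))) :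
    Tendsto (fun M : ℕ => Sd k (d M) (1 - Real.exp (-(lam * t / M))) /
      Zd k (d M) (1 - Real.exp (-(lam * t / M)))) atTop
      (𝓝 ((∑ m ∈ Finset.range k, lam ^ m / (Nat.factorial m : ℝ)) /
        (∑ l ∈ Finset.range (k + 1), lam ^ l / (Nat.factorial l : ℝ)))) := by
  have hdinf : Tendsto d atTop atTop := by
    rw [← tendsto_natCast_atTop_iff (R := ℝ)]
    have := hd.pos_mul_atTop (by positivity) (tendsto_natCast_atTop_atTop (R := ℝ))
    refine this.congr' ?_
    filter_upwards [eventually_gt_atTop 0] with M hM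
    field_simp
  set p : ℕ → ℝ := fun M => 1 - Real.exp (-(lam * t / M)) with hp
  have hp0 : Tendsto p atTop (𝓝 0) := p_lim (lam * t)
  have hp1 : Tendsto (fun M => 1 - p M) atTop (𝓝 1) := by simpa using hp0.const_sub 1
  have hdq : Tendsto (fun M => (d M : ℝ) * (p M / (1 - p M))) atTop (𝓝 lam) := by
    have h := (hd.mul (Mp_lim (lam * t))).div hp1 one_ne_zero
    have e : 1 / t * (lam * t) / 1 = lam := by field_simp
    rw [e] at h
    refine h.congr' ?_
    filter_upwards [eventually_gt_atTop 0] with M hM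
    simp only [hp, Pi.div_apply]
    field_simp
  have hS : Tendsto (fun M => Sd k (d M) (p M)) atTop
      (𝓝 (∑ m ∈ Finset.range k, lam ^ m / (Nat.factorial m : ℝ))) := by
    unfold Sd
    apply tendsto_finsetSum
    intro m _
    exact choose_lim d (fun M => p M / (1 - p M)) lam m hdinf hdq
  have hZ : Tendsto (fun M => Zd k (d M) (p M)) atTop
      (𝓝 (∑ l ∈ Finset.range (k + 1), lam ^ l / (Nat.factorial l : ℝ))) := by
    rw [Finset.sum_range_succ]
    unfold Zd
    apply hS.add
    have := (choose_lim d (fun M => p M / (1 - p M)) lam k hdinf hdq).mul hp1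
    rw [mul_one] at this
    refine this.congr ?_
    intro M
    have h1 : (1 - p M) ≠ 0 := by simp [hp]
    obtain ⟨j, rfl⟩ : ∃ j, k = j + 1 := ⟨k - 1, by omega⟩
    rw [Nat.add_sub_cancel, pow_succ]
    field_simp
  refine hS.div hZ ?_
  have : 0 < ∑ l ∈ Finset.range (k + 1), lam ^ l / (Nat.factorial l : ℝ) := by
    apply Finset.sum_pos
    · intros; positivity
    · simp
  exact this.ne'

abbrev E1 := EuclideanSpace ℝ (Fin 1)

lemma dist_E1 (u v : E1) : dist u v = |u 0 - v 0| := by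
  rw [EuclideanSpace.dist_eq, Fin.sum_univ_one, Real.sqrt_sq dist_nonneg, Real.dist_eq]

lemma mC_bdd (k : ℕ) (r : ℝ) (V : Finset E1) :
    BddAbove {m : ℕ | ∃ S : Finset E1, S ⊆ V ∧ S.card = m ∧
    ∃ c : E1 → Fin k, ∀ u ∈ S, ∀ v ∈ S, u ≠ v → dist u v ≤ r → c u ≠ c v} := by
  refine ⟨V.card, ?_⟩
  rintro m ⟨S, hS, rfl, -⟩
  exact Finset.card_le_card hS

lemma le_mC (k : ℕ) (r : ℝ) (V S : Finset E1) (hS : S ⊆ V) (c : E1 → Fin k)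
    (hc : ∀ u ∈ S, ∀ v ∈ S, u ≠ v → dist u v ≤ r → c u ≠ c v) :
    S.card ≤ maxColorable 1 k r V :=
  le_csSup (mC_bdd k r V) ⟨S, hS, rfl, c, hc⟩

lemma mC_attained (k : ℕ) (hk : 1 ≤ k) (r : ℝ) (V : Finset E1) :
    ∃ S : Finset E1, S ⊆ V ∧ S.card = maxColorable 1 k r V ∧
    ∃ c : E1 → Fin k, ∀ u ∈ S, ∀ v ∈ S, u ≠ v → dist u v ≤ r → c u ≠ c v := by
  refine Nat.sSup_mem (s := {m : ℕ | ∃ S : Finset E1, S ⊆ V ∧ S.card = m ∧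
    ∃ c : E1 → Fin k, ∀ u ∈ S, ∀ v ∈ S, u ≠ v → dist u v ≤ r → c u ≠ c v}) ?_ (mC_bdd k r V)
  exact ⟨0, ∅, by simp, by simp, fun _ => ⟨0, by omega⟩, by simp⟩

/-- the cell of a point -/
noncomputable def cell (M : ℕ) (hM : 0 < M) (x : E1) : Fin M :=
  ⟨min ⌊(M : ℝ) * x 0⌋₊ (M - 1), by omega⟩

lemma cell_le (M : ℕ) (hM : 0 < M) (x : E1) (hx : x ∈ unitCube 1) :
    ((cell M hM x : ℕ) : ℝ) ≤ M * x 0 ∧ (M : ℝ) * x 0 ≤ (cell M hM x : ℕ) + 1 := by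
  obtain ⟨h0, h1⟩ := hx 0
  have hM' : (0 : ℝ) < M := by positivity
  have hp : 0 ≤ (M : ℝ) * x 0 := by positivity
  have ha := Nat.floor_le hp
  have hb := Nat.lt_floor_add_one ((M : ℝ) * x 0)
  simp only [cell]
  constructor
  · refine le_trans ?_ ha
    exact_mod_cast min_le_left _ _
  · rcases le_total ⌊(M : ℝ) * x 0⌋₊ (M - 1) with h | h
    · rw [min_eq_left h]
      exact hb.le
    · rw [min_eq_right h]
      rw [Nat.cast_sub hM]
      push_cast
      nlinarith

lemma grA_low (k d : ℕ) (B w : Finset ℕ) (n : ℕ) :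
    grA k d B w n ⊆ w ∪ (grA k d B w n).filter (fun j => d ≤ j) := by
  induction n with
  | zero => exact Finset.subset_union_left
  | succ n ih =>
    intro j hj
    rw [Finset.mem_union, Finset.mem_filter]
    by_cases hd : d ≤ j
    · exact Or.inr ⟨hj, hd⟩
    · left
      rw [grA] at hj
      have : j ∈ grA k d B w n := by
        split_ifs at hj
        · rcases Finset.mem_insert.1 hj with h | h
          · omega
          · exact h
        · exact hj
      rcases Finset.mem_union.1 (ih this) with h | h
      · exact h
      · exact absurd (Finset.mem_filter.1 h).2 hd

lemma mC_lower (k : ℕ) (hk : 1 ≤ k) (r : ℝ) (n M d : ℕ) (hM : 0 < M) (hd : r * M < d)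
    (x : Fin n → E1) (hx : ∀ i, x i ∈ unitCube 1) (w : Finset ℕ) (hw : w ⊆ Finset.range d) :
    (grA k d (occ (fun i => cell M hM (x i))) w M).card ≤
      maxColorable 1 k r (Finset.image x Finset.univ) + w.card := by
  set B := occ (fun i => cell M hM (x i)) with hB
  set G := (grA k d B w M).filter (fun j => d ≤ j) with hG
  have hM' : (0 : ℝ) < M := by positivity
  have h1 : (grA k d B w M).card ≤ w.card + G.card :=
    (Finset.card_le_card (grA_low k d B w M)).trans (Finset.card_union_le _ _)
  obtain ⟨c, hc⟩ := grA_color k d hk B w hw M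
  have h2 : ∀ j : ℕ, ∃ p : E1, j ∈ G → (p ∈ Finset.image x Finset.univ ∧
      ((cell M hM p : Fin M) : ℕ) + d = j ∧ p ∈ unitCube 1) := by
    intro j
    by_cases hj : j ∈ G
    · have hj' := Finset.mem_filter.1 hj
      have := (grA_mem k d B w hw M j hj'.1 hj'.2).1
      simp only [hB, occ, Finset.mem_image, Finset.mem_univ, true_and] at this
      obtain ⟨i, hi⟩ := this
      exact ⟨x i, fun _ => ⟨by simp, by omega, hx i⟩⟩
    · exact ⟨0, fun h => absurd h hj⟩
  choose g hg using h2
  have hcard : (G.image g).card = G.card := by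
    apply Finset.card_image_of_injOn
    intro a ha b hb hab
    have e1 := (hg a ha).2.1
    have e2 := (hg b hb).2.1
    rw [hab] at e1
    omega
  have key : ∀ a ∈ G, ∀ b ∈ G, a < b → dist (g a) (g b) ≤ r → c a ≠ c b := by
    intro a ha b hb hab hdist
    have ha' := Finset.mem_filter.1 ha
    have hb' := Finset.mem_filter.1 hb
    apply hc a ha'.1 b hb'.1 ha'.2 hb'.2 hab
    by_contra hlt
    push Not at hlt
    obtain ⟨-, ea, ca⟩ := hg a ha
    obtain ⟨-, eb, cb⟩ := hg b hb
    have h3 := (cell_le M hM _ ca).2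
    have h4 := (cell_le M hM _ cb).1
    have h5 : (cell M hM (g a) : ℕ) + d + 1 ≤ (cell M hM (g b) : ℕ) := by omega
    have h5' : ((cell M hM (g a) : ℕ) : ℝ) + d + 1 ≤ ((cell M hM (g b) : ℕ) : ℝ) := by
      exact_mod_cast h5
    rw [dist_E1, abs_le] at hdist
    have h6 := hdist.1
    nlinarith
  have h3 := le_mC k r (Finset.image x Finset.univ) (G.image g) (by
      intro p hp
      obtain ⟨a, ha, rfl⟩ := Finset.mem_image.1 hp
      exact (hg a ha).1) (fun p => c ((cell M hM p : ℕ) + d)) (by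
      intro u hu v hv huv hdist
      obtain ⟨a, ha, rfl⟩ := Finset.mem_image.1 hu
      obtain ⟨b, hb, rfl⟩ := Finset.mem_image.1 hv
      simp only [(hg a ha).2.1, (hg b hb).2.1]
      rcases lt_trichotomy a b with h | h | h
      · exact key a ha b hb h hdist
      · exact absurd (by rw [h]) huv
      · exact (key b hb a ha h (by rwa [dist_comm])).symm)
  omega

lemma mC_upper (k : ℕ) (hk : 1 ≤ k) (r : ℝ) (n M d : ℕ) (hM : 0 < M) (hd : (d : ℝ) + 1 ≤ r * M)
    (x : Fin n → E1) (hx : ∀ i, x i ∈ unitCube 1) (w : Finset ℕ) (hw : w ⊆ Finset.range d) :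
    maxColorable 1 k r (Finset.image x Finset.univ) + w.card +
      (occ (fun i => cell M hM (x i))).card ≤
    n + (grA k d (occ (fun i => cell M hM (x i))) w M).card + k := by
  set B := occ (fun i => cell M hM (x i)) with hB
  have hM' : (0 : ℝ) < M := by positivity
  obtain ⟨S, hS, hcard, c, hc⟩ := mC_attained k hk r (Finset.image x Finset.univ)
  have hScube : ∀ p ∈ S, p ∈ unitCube 1 := by
    intro p hp
    obtain ⟨i, -, rfl⟩ := Finset.mem_image.1 (hS hp)
    exact hx i
  have hBimg : B = (Finset.image x Finset.univ).image (fun p => (cell M hM p : ℕ)) := by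
    rw [hB, occ, Finset.image_image]
    rfl
  set T := S.image (fun p => (cell M hM p : ℕ)) with hT
  have hTB : T ⊆ B := by
    rw [hBimg]
    exact Finset.image_subset_image hS
  have h1 : S.card + B.card ≤ n + T.card := by
    have a1 : B \ T ⊆ ((Finset.image x Finset.univ) \ S).image
        (fun p => (cell M hM p : ℕ)) := by
      intro j hj
      rw [Finset.mem_sdiff, hBimg] at hj
      obtain ⟨p, hp, rfl⟩ := Finset.mem_image.1 hj.1
      refine Finset.mem_image_of_mem _ (Finset.mem_sdiff.2 ⟨hp, fun h => hj.2 ?_⟩)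
      exact Finset.mem_image_of_mem _ h
    have a2 := (Finset.card_le_card a1).trans Finset.card_image_le
    rw [Finset.card_sdiff_of_subset hTB, Finset.card_sdiff_of_subset hS] at a2
    have a3 : (Finset.image x Finset.univ).card ≤ n := by
      simpa using Finset.card_image_le (s := (Finset.univ : Finset (Fin n))) (f := x)
    have a4 := Finset.card_le_card hS
    have a5 := Finset.card_le_card hTB
    omega
  have h2 : ∀ s, (T.filter (fun j => s ≤ j ∧ j ≤ s + d)).card ≤ k := by
    intro s
    by_contra hlt
    push Not at hlt
    have hex : ∀ j : ℕ, ∃ p : E1, j ∈ T → (p ∈ S ∧ (cell M hM p : ℕ) = j) := by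
      intro j
      by_cases hj : j ∈ T
      · obtain ⟨p, hp, e⟩ := Finset.mem_image.1 hj
        exact ⟨p, fun _ => ⟨hp, e⟩⟩
      · exact ⟨0, fun h => absurd h hj⟩
    choose g hg using hex
    obtain ⟨a, ha, b, hb, hab, hcol⟩ := Finset.exists_ne_map_eq_of_card_lt_of_maps_to
      (s := T.filter (fun j => s ≤ j ∧ j ≤ s + d)) (t := (Finset.univ : Finset (Fin k)))
      (f := fun j => c (g j)) (by simpa using hlt) (fun _ _ => Finset.mem_coe.2 (Finset.mem_univ _))
    obtain ⟨ha1, ha2, ha3⟩ := Finset.mem_filter.1 ha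
    obtain ⟨hb1, hb2, hb3⟩ := Finset.mem_filter.1 hb
    obtain ⟨ga, ea⟩ := hg a ha1
    obtain ⟨gb, eb⟩ := hg b hb1
    refine hc (g a) ga (g b) gb ?_ ?_ hcol
    · intro h
      rw [h] at ea
      exact hab (ea.symm.trans eb)
    · have ca := cell_le M hM _ (hScube _ ga)
      have cb := cell_le M hM _ (hScube _ gb)
      rw [ea] at ca
      rw [eb] at cb
      have i1 : (a : ℝ) ≤ b + d := by exact_mod_cast (by omega : a ≤ b + d)
      have i2 : (b : ℝ) ≤ a + d := by exact_mod_cast (by omega : b ≤ a + d)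
      rw [dist_E1, abs_le]
      constructor <;> nlinarith [ca.1, ca.2, cb.1, cb.2]
  have h3 := grA_opt k d B w T hw hTB h2 M
  have h4 : T.filter (fun j => j < M) = T := by
    apply Finset.filter_true_of_mem
    intro j hj
    exact Finset.mem_range.1 (occ_subset _ (hTB hj))
  rw [h4] at h3
  omega

lemma mC_transfer (k : ℕ) (hk : 1 ≤ k) (r : ℝ) (n : ℕ) (x y : Fin n → E1)
    (h1 : ∀ i j, x i = x j ↔ y i = y j) (h2 : ∀ i j, dist (x i) (x j) ≤ r ↔ dist (y i) (y j) ≤ r) :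
    maxColorable 1 k r (Finset.image x Finset.univ) ≤
      maxColorable 1 k r (Finset.image y Finset.univ) := by
  obtain ⟨S, hS, hcard, c, hc⟩ := mC_attained k hk r (Finset.image x Finset.univ)
  have fxy : ∀ i, Function.extend x y id (x i) = y i :=
    fun i => Function.FactorsThrough.extend_apply (fun a b h => (h1 a b).1 h) id i
  have fyx : ∀ i, Function.extend y x id (y i) = x i :=
    fun i => Function.FactorsThrough.extend_apply (fun a b h => (h1 a b).2 h) id i
  have hSx : ∀ p ∈ S, ∃ i, p = x i := by
    intro p hp
    obtain ⟨i, -, rfl⟩ := Finset.mem_image.1 (hS hp)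
    exact ⟨i, rfl⟩
  rw [← hcard, ← Finset.card_image_of_injOn (s := S) (f := Function.extend x y id)]
  · refine le_mC k r _ _ ?_ (fun p => c (Function.extend y x id p)) ?_
    · intro q hq
      obtain ⟨p, hp, rfl⟩ := Finset.mem_image.1 hq
      obtain ⟨i, rfl⟩ := hSx p hp
      rw [fxy]
      simp
    · intro u hu v hv huv hdist
      obtain ⟨p, hp, rfl⟩ := Finset.mem_image.1 hu
      obtain ⟨i, rfl⟩ := hSx p hp
      obtain ⟨p', hp', rfl⟩ := Finset.mem_image.1 hv
      obtain ⟨j, rfl⟩ := hSx p' hp'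
      rw [fxy, fxy] at hdist huv
      simp only [fxy, fyx]
      exact hc _ hp _ hp' (fun h => huv ((h1 i j).1 h)) ((h2 i j).2 hdist)
  · intro p hp p' hp' he
    obtain ⟨i, rfl⟩ := hSx p hp
    obtain ⟨j, rfl⟩ := hSx p' hp'
    rw [fxy, fxy] at he
    exact (h1 i j).2 he

lemma mC_measurable (k : ℕ) (hk : 1 ≤ k) (r : ℝ) (n : ℕ) :
    Measurable (fun x : Fin n → E1 => (maxColorable 1 k r (Finset.image x Finset.univ) : ℝ)) := by
  let P : (Fin n → E1) → (Fin n → Fin n → Prop × Prop) :=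
    fun x i j => (x i = x j, dist (x i) (x j) ≤ r)
  have hP : Measurable P := by
    refine measurable_pi_iff.2 fun i => measurable_pi_iff.2 fun j => Measurable.prodMk ?_ ?_
    · exact measurableSet_setOf.1 (measurableSet_eq_fun (measurable_pi_apply i)
        (measurable_pi_apply j))
    · exact measurableSet_setOf.1 (measurableSet_le
        ((measurable_pi_apply i).dist (measurable_pi_apply j)) measurable_const)
  have hf : Function.FactorsThrough
      (fun x : Fin n → E1 => (maxColorable 1 k r (Finset.image x Finset.univ) : ℝ)) P := by
    intro x y hxy
    have e1 : ∀ i j, x i = x j ↔ y i = y j := fun i j => by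
      have := congrArg Prod.fst (congrFun (congrFun hxy i) j)
      exact iff_of_eq this
    have e2 : ∀ i j, dist (x i) (x j) ≤ r ↔ dist (y i) (y j) ≤ r := fun i j => by
      have := congrArg Prod.snd (congrFun (congrFun hxy i) j)
      exact iff_of_eq this
    have := le_antisymm (mC_transfer k hk r n x y e1 e2)
      (mC_transfer k hk r n y x (fun i j => (e1 i j).symm) (fun i j => (e2 i j).symm))
    simp only [this]
  have e : (fun x : Fin n → E1 => (maxColorable 1 k r (Finset.image x Finset.univ) : ℝ)) =
      Function.extend P (fun x => (maxColorable 1 k r (Finset.image x Finset.univ) : ℝ))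
        (fun _ => 0) ∘ P := by
    ext x
    exact (hf.extend_apply (fun _ => 0) x).symm
  rw [e]
  exact (Measurable.of_discrete).comp hP

lemma vol_E1 (s : Set ℝ) (hs : MeasurableSet s) :
    (volume : Measure E1) {x | x 0 ∈ s} = volume s := by
  have h1 := (PiLp.volume_preserving_ofLp (Fin 1))
  have h2 := (volume_preserving_funUnique (Fin 1) ℝ).comp h1
  have := h2.measure_preimage hs.nullMeasurableSet
  rw [← this]
  rfl

lemma unitCube_meas : MeasurableSet (unitCube 1) := by
  have : unitCube 1 = ⋂ i : Fin 1, (fun x : E1 => x i) ⁻¹' Set.Icc (0:ℝ) 1 := by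
    ext x; simp [unitCube]
  rw [this]
  refine MeasurableSet.iInter fun i => ?_
  exact measurableSet_Icc.preimage (by fun_prop)

instance : IsProbabilityMeasure (uniformCube 1) := by
  constructor
  rw [uniformCube, Measure.restrict_apply_univ]
  have : unitCube 1 = {x : E1 | x 0 ∈ Set.Icc (0:ℝ) 1} := by
    ext x
    simp only [unitCube, Set.mem_setOf_eq]
    constructor
    · exact fun h => h 0
    · intro h i
      rwa [Subsingleton.elim i 0]
  rw [this, vol_E1 _ measurableSet_Icc]
  simp

lemma cell_measurable (M : ℕ) (hM : 0 < M) : Measurable (cell M hM) := by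
  have h1 : Measurable (fun x : E1 => ⌊(M : ℝ) * x 0⌋₊) :=
    Nat.measurable_floor.comp (by fun_prop)
  exact (Measurable.of_discrete
    (f := fun a : ℕ => (⟨min a (M - 1), by omega⟩ : Fin M))).comp h1

lemma cell_law (M : ℕ) (hM : 0 < M) (j : Fin M) :
    ((uniformCube 1).map (cell M hM)).real {j} = 1 / M := by
  have hM' : (0 : ℝ) < M := by positivity
  rw [measureReal_def, Measure.map_apply (cell_measurable M hM) (measurableSet_singleton _),
    uniformCube, Measure.restrict_apply ((cell_measurable M hM) (measurableSet_singleton _))]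
  have hj1 : ((j : ℕ) : ℝ) + 1 ≤ M := by exact_mod_cast j.2
  have hj0 : (0 : ℝ) ≤ (j : ℕ) := by positivity
  have up : (volume : Measure E1) (cell M hM ⁻¹' {j} ∩ unitCube 1) ≤ ENNReal.ofReal (1 / M) := by
    have : cell M hM ⁻¹' {j} ∩ unitCube 1 ⊆
        {x : E1 | x 0 ∈ Set.Icc (((j : ℕ) : ℝ) / M) ((((j : ℕ) : ℝ) + 1) / M)} := by
      rintro x ⟨hx1, hx2⟩
      have h := cell_le M hM x hx2
      rw [Set.mem_preimage, Set.mem_singleton_iff] at hx1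
      rw [hx1] at h
      constructor
      · rw [div_le_iff₀ hM']; linarith [h.1]
      · rw [le_div_iff₀ hM']; linarith [h.2]
    refine (measure_mono this).trans ?_
    rw [vol_E1 _ measurableSet_Icc, Real.volume_Icc]
    apply le_of_eq
    congr 1
    ring
  have low : ENNReal.ofReal (1 / M) ≤ (volume : Measure E1) (cell M hM ⁻¹' {j} ∩ unitCube 1) := by
    have : {x : E1 | x 0 ∈ Set.Ioo (((j : ℕ) : ℝ) / M) ((((j : ℕ) : ℝ) + 1) / M)} ⊆
        cell M hM ⁻¹' {j} ∩ unitCube 1 := by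
      rintro x ⟨hx1, hx2⟩
      rw [div_lt_iff₀ hM'] at hx1
      rw [lt_div_iff₀ hM'] at hx2
      have hfl : ⌊(M : ℝ) * x 0⌋₊ = (j : ℕ) := by
        rw [Nat.floor_eq_iff (by linarith)]
        constructor <;> linarith
      constructor
      · apply Fin.ext
        simp only [cell]
        rw [hfl]
        have := j.2
        omega
      · intro i
        rw [Subsingleton.elim i 0]
        constructor <;> nlinarith
    refine le_trans ?_ (measure_mono this)
    rw [vol_E1 _ measurableSet_Ioo, Real.volume_Ioo]
    apply le_of_eq
    congr 1
    ring
  rw [le_antisymm up low, ENNReal.toReal_ofReal (by positivity)]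

lemma int_cell (M : ℕ) (hM : 0 < M) (n : ℕ) (h : (Fin n → Fin M) → ℝ) :
    ∫ x : Fin n → E1, h (fun i => cell M hM (x i)) ∂(Measure.pi fun _ => uniformCube 1) =
      (∑ y, h y) / (M : ℝ) ^ n := by
  have hm : Measurable (fun (x : Fin n → E1) (i : Fin n) => cell M hM (x i)) :=
    measurable_pi_iff.2 fun i => (cell_measurable M hM).comp (measurable_pi_apply i)
  have : IsProbabilityMeasure ((uniformCube 1).map (cell M hM)) :=
    Measure.isProbabilityMeasure_map (cell_measurable M hM).aemeasurable
  have h1 : ∫ x : Fin n → E1, h (fun i => cell M hM (x i)) ∂(Measure.pi fun _ => uniformCube 1) =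
      ∫ y, h y ∂((Measure.pi fun _ => uniformCube 1).map
        (fun (x : Fin n → E1) (i : Fin n) => cell M hM (x i))) := by
    rw [integral_map hm.aemeasurable]
    exact Measurable.of_discrete.aestronglyMeasurable
  rw [h1, Measure.pi_map_pi (fun i => (cell_measurable M hM).aemeasurable),
    integral_fintype .of_finite, Finset.sum_div]
  apply Finset.sum_congr rfl
  intro y _
  have : (Measure.pi fun _ : Fin n => (uniformCube 1).map (cell M hM)).real {y} =
      1 / (M : ℝ) ^ n := by
    rw [measureReal_def, Measure.pi_singleton, ENNReal.toReal_prod]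
    have := cell_law M hM
    simp only [measureReal_def] at this
    simp [this]
  rw [this, smul_eq_mul]
  ring

lemma ae_cube (n : ℕ) : ∀ᵐ x : Fin n → E1 ∂(Measure.pi fun _ => uniformCube 1),
    ∀ i, x i ∈ unitCube 1 := by
  have h : (Measure.pi fun _ : Fin n => uniformCube 1) =
      (Measure.pi fun _ : Fin n => (volume : Measure E1)).restrict
        (Set.pi Set.univ fun _ => unitCube 1) := by
    rw [Measure.restrict_pi_pi]
    rfl
  rw [h]
  filter_upwards [ae_restrict_mem (MeasurableSet.univ_pi fun _ => unitCube_meas)] with x hx i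
  exact hx i (Set.mem_univ i)

lemma mC_le_n (k : ℕ) (hk : 1 ≤ k) (r : ℝ) (n : ℕ) (x : Fin n → E1) :
    maxColorable 1 k r (Finset.image x Finset.univ) ≤ n := by
  obtain ⟨S, hS, hcard, -⟩ := mC_attained k hk r (Finset.image x Finset.univ)
  rw [← hcard]
  refine (Finset.card_le_card hS).trans ?_
  simpa using Finset.card_image_le (s := (Finset.univ : Finset (Fin n))) (f := x)

lemma mC_integrable (k : ℕ) (hk : 1 ≤ k) (r : ℝ) (n : ℕ) :
    Integrable (fun x : Fin n → E1 => (maxColorable 1 k r (Finset.image x Finset.univ) : ℝ))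
      (Measure.pi fun _ => uniformCube 1) := by
  refine Integrable.of_bound (mC_measurable k hk r n).aestronglyMeasurable (n : ℝ) ?_
  filter_upwards with x
  rw [Real.norm_of_nonneg (by positivity)]
  exact Nat.cast_le.2 (mC_le_n k hk r n x)

lemma cell_integrable (M : ℕ) (hM : 0 < M) (n : ℕ) (h : (Fin n → Fin M) → ℝ) :
    Integrable (fun x : Fin n → E1 => h (fun i => cell M hM (x i)))
      (Measure.pi fun _ => uniformCube 1) := by
  have hm : Measurable (fun (x : Fin n → E1) (i : Fin n) => cell M hM (x i)) :=
    measurable_pi_iff.2 fun i => (cell_measurable M hM).comp (measurable_pi_apply i)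
  refine Integrable.of_bound
    ((Measurable.of_discrete (f := h)).comp hm).aestronglyMeasurable (∑ y, ‖h y‖) ?_
  filter_upwards with x
  exact Finset.single_le_sum (f := fun y => ‖h y‖) (fun _ _ => norm_nonneg _)
    (Finset.mem_univ (fun i => cell M hM (x i)))

lemma EH_lower (k : ℕ) (hk : 1 ≤ k) (r : ℝ) (n M d : ℕ) (hM : 0 < M) (hd : r * M < d)
    (w : Finset ℕ) (hw : w ⊆ Finset.range d) :
    (∑ y : Fin n → Fin M, (((grA k d (occ y) w M).card : ℝ) - w.card)) / (M : ℝ) ^ n ≤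
      EH 1 k r n := by
  rw [← int_cell M hM n (fun y => ((grA k d (occ y) w M).card : ℝ) - w.card), EH]
  refine integral_mono_ae
    (cell_integrable M hM n (fun y => ((grA k d (occ y) w M).card : ℝ) - w.card))
    (mC_integrable k hk r n) ?_
  filter_upwards [ae_cube n] with x hx
  have := mC_lower k hk r n M d hM hd x hx w hw
  have h2 : ((grA k d (occ (fun i => cell M hM (x i))) w M).card : ℝ) ≤
      maxColorable 1 k r (Finset.image x Finset.univ) + w.card := by exact_mod_cast this
  linarith

lemma EH_upper (k : ℕ) (hk : 1 ≤ k) (r : ℝ) (n M d : ℕ) (hM : 0 < M)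
    (hd : (d : ℝ) + 1 ≤ r * M) (w : Finset ℕ) (hw : w ⊆ Finset.range d) :
    EH 1 k r n ≤ n + (∑ y : Fin n → Fin M,
      (((grA k d (occ y) w M).card : ℝ) - w.card + k - (occ y).card)) / (M : ℝ) ^ n := by
  have hi := cell_integrable M hM n
    (fun y => ((grA k d (occ y) w M).card : ℝ) - w.card + k - (occ y).card)
  have h0 : (n : ℝ) = ∫ x : Fin n → E1, (n : ℝ) ∂(Measure.pi fun _ => uniformCube 1) := by
    simp
  rw [← int_cell M hM n (fun y => ((grA k d (occ y) w M).card : ℝ) - w.card + k - (occ y).card),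
    EH]
  conv_rhs => rw [h0]
  rw [← integral_add (integrable_const _) hi]
  refine integral_mono_ae (mC_integrable k hk r n) ((integrable_const _).add hi) ?_
  filter_upwards [ae_cube n] with x hx
  have := mC_upper k hk r n M d hM hd x hx w hw
  have h2 : (maxColorable 1 k r (Finset.image x Finset.univ) : ℝ) + w.card +
      (occ (fun i => cell M hM (x i))).card ≤
      n + (grA k d (occ (fun i => cell M hM (x i))) w M).card + k := by exact_mod_cast this
  linarith

lemma EH_nonneg (k : ℕ) (r : ℝ) (n : ℕ) : 0 ≤ EH 1 k r n :=
  integral_nonneg fun _ => by positivity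

lemma EH_le (k : ℕ) (hk : 1 ≤ k) (r : ℝ) (n : ℕ) : EH 1 k r n ≤ n := by
  have h0 : (n : ℝ) = ∫ x : Fin n → E1, (n : ℝ) ∂(Measure.pi fun _ => uniformCube 1) := by
    simp
  rw [h0]
  refine integral_mono (mC_integrable k hk r n) (integrable_const _) fun x => ?_
  exact Nat.cast_le.2 (mC_le_n k hk r n x)

lemma EF_summable (k : ℕ) (hk : 1 ≤ k) (r : ℝ) (mu : NNReal) :
    Summable (fun n => poissonPMFReal mu n * EH 1 k r n) := by
  refine Summable.of_nonneg_of_le (fun n => mul_nonneg poissonPMFReal_nonneg (EH_nonneg k r n))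
    (fun n => ?_) (pois_mean mu).summable
  exact mul_le_mul_of_nonneg_left (EH_le k hk r n) poissonPMFReal_nonneg

lemma p_mem (mu : ℝ) (hmu : 0 < mu) (M : ℕ) (hM : 0 < M) :
    0 < 1 - Real.exp (-(mu / M)) ∧ 1 - Real.exp (-(mu / M)) < 1 := by
  have hM' : (0 : ℝ) < M := by positivity
  have h1 : Real.exp (-(mu / M)) < 1 := Real.exp_lt_one_iff.2 (by
    have : 0 < mu / M := by positivity
    linarith)
  have h2 := Real.exp_pos (-(mu / M))
  constructor <;> linarith

lemma Zd_pos (k : ℕ) (hk : 1 ≤ k) (d : ℕ) (p : ℝ) (hp : 0 < p) (hp1 : p < 1) :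
    0 < Zd k d p := by
  have h1 : 0 < 1 - p := by linarith
  have h2 : 0 < Sd k d p := by
    unfold Sd
    apply Finset.sum_pos'
    · intros; positivity
    · exact ⟨0, by simp; omega, by simp⟩
  unfold Zd
  positivity

lemma EF_lower (k : ℕ) (hk : 1 ≤ k) (lam t : ℝ) (hlam : 0 < lam) (ht : 0 < t)
    (M d : ℕ) (hM : 0 < M) (hd : 1 / t * M < d) :
    M * (1 - Real.exp (-(lam * t / M))) * (Sd k d (1 - Real.exp (-(lam * t / M))) /
      Zd k d (1 - Real.exp (-(lam * t / M)))) ≤ EF 1 k lam t := by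
  have hM' : (0 : ℝ) < M := by positivity
  have hd1 : 1 ≤ d := by
    have : (0 : ℝ) < d := lt_of_le_of_lt (by positivity) hd
    exact_mod_cast this
  obtain ⟨hp, hp1⟩ := p_mem (lam * t) (by positivity) M hM
  have hmu : ((Real.toNNReal (lam * t ^ 1) : NNReal) : ℝ) = lam * t := by
    rw [pow_one, Real.coe_toNNReal _ (by positivity)]
  have key : ∀ w ∈ (Finset.range d).powerset,
      bE (1 - Real.exp (-(lam * t / M))) M (fun B => ((grA k d B w M).card : ℝ) - w.card) ≤
        EF 1 k lam t := by
    intro w hw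
    have h1 := avg_hasSum M hM (Real.toNNReal (lam * t ^ 1))
      (fun B => ((grA k d B w M).card : ℝ) - w.card)
    rw [hmu] at h1
    refine hasSum_le (fun n => ?_) h1 (EF_summable k hk (1 / t) _).hasSum
    exact mul_le_mul_of_nonneg_left
      (EH_lower k hk (1 / t) n M d hM hd w (Finset.mem_powerset.1 hw)) poissonPMFReal_nonneg
  set p := 1 - Real.exp (-(lam * t / M))
  have hZ := Zd_pos k hk d p hp hp1
  have h2 : M * p * Sd k d p ≤ Zd k d p * EF 1 k lam t := by
    rw [← phi_sum, Finset.sum_mul, Sd, ← card_law k d hk hd1 p hp hp1 M]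
    exact Finset.sum_le_sum fun w hw =>
      mul_le_mul_of_nonneg_left (key w hw) (phi_nonneg k p hp hp1 _)
  rw [← mul_div_assoc, div_le_iff₀ hZ]
  linarith

lemma EF_upper (k : ℕ) (hk : 1 ≤ k) (lam t : ℝ) (hlam : 0 < lam) (ht : 0 < t)
    (M d : ℕ) (hM : 0 < M) (hd1 : 1 ≤ d) (hd : (d : ℝ) + 1 ≤ 1 / t * M) :
    EF 1 k lam t ≤ lam * t - M * (1 - Real.exp (-(lam * t / M))) + k +
     M * (1 - Real.exp (-(lam * t / M))) * (Sd k d (1 - Real.exp (-(lam * t / M))) /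
      Zd k d (1 - Real.exp (-(lam * t / M)))) := by
  have hM' : (0 : ℝ) < M := by positivity
  obtain ⟨hp, hp1⟩ := p_mem (lam * t) (by positivity) M hM
  have hmu : ((Real.toNNReal (lam * t ^ 1) : NNReal) : ℝ) = lam * t := by
    rw [pow_one, Real.coe_toNNReal _ (by positivity)]
  have key : ∀ w ∈ (Finset.range d).powerset, EF 1 k lam t ≤
      (lam * t - M * (1 - Real.exp (-(lam * t / M))) + k) +
      bE (1 - Real.exp (-(lam * t / M))) M (fun B => ((grA k d B w M).card : ℝ) - w.card) := by
    intro w hw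
    have h1 := avg_hasSum M hM (Real.toNNReal (lam * t ^ 1))
      (fun B => ((grA k d B w M).card : ℝ) - w.card + k - B.card)
    have h2 := (pois_mean (Real.toNNReal (lam * t ^ 1))).add h1
    rw [hmu, bE_sub, bE_add, bE_const, bE_card] at h2
    have h3 := hasSum_le (fun n => ?_) (EF_summable k hk (1 / t) (Real.toNNReal (lam * t ^ 1))).hasSum h2
    · change EF 1 k lam t ≤ _ at h3
      linarith
    · rw [← mul_add]
      exact mul_le_mul_of_nonneg_left
        (EH_upper k hk (1 / t) n M d hM hd w (Finset.mem_powerset.1 hw)) poissonPMFReal_nonneg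
  set p := 1 - Real.exp (-(lam * t / M))
  have hZ := Zd_pos k hk d p hp hp1
  have h2 : Zd k d p * EF 1 k lam t ≤ Zd k d p * (lam * t - M * p + k) + M * p * Sd k d p := by
    rw [← phi_sum, Finset.sum_mul, Finset.sum_mul, Sd, ← card_law k d hk hd1 p hp hp1 M,
      ← Finset.sum_add_distrib]
    refine Finset.sum_le_sum fun w hw => ?_
    rw [← mul_add]
    exact mul_le_mul_of_nonneg_left (key w hw) (phi_nonneg k p hp hp1 _)
  have h3 : M * p * (Sd k d p / Zd k d p) = M * p * Sd k d p / Zd k d p := by ring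
  rw [h3, ← sub_le_iff_le_add', le_div_iff₀ hZ]
  linarith

open Topology in
lemma EF_bounds (k : ℕ) (hk : 1 ≤ k) (lam t : ℝ) (hlam : 0 < lam) (ht : 0 < t) :
    lam * t * ((∑ m ∈ Finset.range k, lam ^ m / (Nat.factorial m : ℝ)) /
        (∑ l ∈ Finset.range (k + 1), lam ^ l / (Nat.factorial l : ℝ))) ≤ EF 1 k lam t ∧
    EF 1 k lam t ≤ k + lam * t * ((∑ m ∈ Finset.range k, lam ^ m / (Nat.factorial m : ℝ)) /
        (∑ l ∈ Finset.range (k + 1), lam ^ l / (Nat.factorial l : ℝ))) := by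
  have ht' : 0 ≤ 1 / t := by positivity
  have hfl : Tendsto (fun M : ℕ => (⌊1 / t * (M : ℝ)⌋₊ : ℝ) / M) atTop (𝓝 (1 / t)) :=
    (tendsto_nat_floor_mul_div_atTop ht').comp tendsto_natCast_atTop_atTop
  have hinv : Tendsto (fun M : ℕ => (1 : ℝ) / M) atTop (𝓝 0) :=
    tendsto_const_div_atTop_nhds_zero_nat 1
  have hlarge : Tendsto (fun M : ℕ => 1 / t * (M : ℝ)) atTop atTop :=
    tendsto_natCast_atTop_atTop.const_mul_atTop (by positivity)
  constructor
  · have hd : Tendsto (fun M : ℕ => ((⌊1 / t * (M : ℝ)⌋₊ + 1 : ℕ) : ℝ) / M) atTop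
        (𝓝 (1 / t)) := by
      have := hfl.add hinv
      rw [add_zero] at this
      refine this.congr fun M => ?_
      push_cast
      ring
    refine le_of_tendsto ((Mp_lim (lam * t)).mul
      (ratio_lim k hk lam t hlam ht (fun M => ⌊1 / t * (M : ℝ)⌋₊ + 1) hd)) ?_
    filter_upwards [eventually_gt_atTop 0] with M hM
    exact EF_lower k hk lam t hlam ht M _ hM (by exact_mod_cast Nat.lt_floor_add_one _)
  · have hd : Tendsto (fun M : ℕ => ((⌊1 / t * (M : ℝ)⌋₊ - 1 : ℕ) : ℝ) / M) atTop
        (𝓝 (1 / t)) := by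
      have := hfl.sub hinv
      rw [sub_zero] at this
      refine this.congr' ?_
      filter_upwards [hlarge.eventually_ge_atTop 2] with M hM
      have : 1 ≤ ⌊1 / t * (M : ℝ)⌋₊ := Nat.le_floor (by push_cast; linarith)
      rw [Nat.cast_sub this]
      push_cast
      ring
    have hlim := (((Mp_lim (lam * t)).const_sub (lam * t)).add_const (k : ℝ)).add
      ((Mp_lim (lam * t)).mul
        (ratio_lim k hk lam t hlam ht (fun M => ⌊1 / t * (M : ℝ)⌋₊ - 1) hd))
    rw [sub_self, zero_add] at hlim
    refine ge_of_tendsto hlim ?_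
    filter_upwards [eventually_gt_atTop 0, hlarge.eventually_ge_atTop 2] with M hM hM2
    have h2 : 2 ≤ ⌊1 / t * (M : ℝ)⌋₊ := Nat.le_floor (by push_cast; linarith)
    refine EF_upper k hk lam t hlam ht M _ hM (by omega) ?_
    rw [Nat.cast_sub (by omega)]
    have := Nat.floor_le (show 0 ≤ 1 / t * (M : ℝ) by positivity)
    push_cast
    linarith

/-- exact value in dimension one:
`a_{k,λ} = (∑_{m=0}^{k−1} λ^m/m!) / (∑_{l=0}^{k} λ^l/l!) = 1 − Erl(λ,k)`. -/
theorem aConst_dim_one (k : ℕ) (hk : 1 ≤ k) (lam : ℝ) (hlam : 0 < lam) :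
    aConst 1 k lam =
      (∑ m ∈ Finset.range k, lam ^ m / (Nat.factorial m : ℝ)) /
        (∑ l ∈ Finset.range (k + 1), lam ^ l / (Nat.factorial l : ℝ)) := by
  have hb := fun t ht => EF_bounds k hk lam t hlam ht
  set α := (∑ m ∈ Finset.range k, lam ^ m / (Nat.factorial m : ℝ)) /
        (∑ l ∈ Finset.range (k + 1), lam ^ l / (Nat.factorial l : ℝ)) with hα
  have hlow : ∀ x ∈ {x : ℝ | ∃ t : ℝ, 0 < t ∧ x = Fbar 1 k lam t}, α ≤ x := by
    rintro x ⟨t, ht, rfl⟩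
    rw [Fbar, pow_one, le_div_iff₀ (by positivity)]
    linarith [(hb t ht).1]
  unfold aConst
  apply le_antisymm
  · refine le_of_forall_pos_le_add fun ε hε => ?_
    have hk' : (0 : ℝ) < k := by exact_mod_cast hk
    have ht : 0 < (k : ℝ) / (lam * ε) := by positivity
    refine (csInf_le ⟨α, hlow⟩ ⟨(k : ℝ) / (lam * ε), ht, rfl⟩).trans ?_
    rw [Fbar, pow_one, div_le_iff₀ (by positivity)]
    refine (hb _ ht).2.trans (le_of_eq ?_)
    field_simp
    ring
  · exact le_csInf ⟨_, 1, one_pos, rfl⟩ hlow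
end
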